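/- arXiv:2501.10949 — 2 statements merged into one kernel-verified Lean document; each statement's English description precedes it below -/
import Mathlib

section
/- Fix r ∈ {1,2,…,∞} and an integer q ≥ 1, and let 𝓕 be the space of C^r families (f_t)_{t∈[0,1]^q} of functions f_t : ℝ/ℤ → ℝ, endowed with the C^r topology. For each ε ∈ (0,1), the set {((f_t),T) ∈ 𝓕 × 𝓔^r : m_q({t ∈ [0,1]^q : Ω(f_t,T) is a periodic orbit of T}) > ε} is open in 𝓕 × 𝓔^r, where m_q is Lebesgue measure on [0,1]^q. -/
/-!
The condition that `Ω(f_t, T)` be a periodic orbit is shown to be open jointly in the family, the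
map `T` and the parameter `t` (`MaxErg.eventually_periodic`). Inner regularity of Lebesgue
measure then gives a compact set of good parameters of measure `> ε`, and the tube lemma shows
that all of them remain good for every nearby pair, which is the claim.

Joint openness rests on a quantitative form of expansion, `MaxErg.Sys`: with uniform constants,
orbit segments can be pulled back along a branch and closed up to a periodic orbit, with errors
summable along the segment, and the map is expansive. `MaxErg.uniform_sys` provides such
constants for all maps `C¹`-close to a given expanding map, by means of an adapted metric on the
line. Nearby members of nearby families have a common Lipschitz constant
(`MaxErg.famMem_nhds`).

Call excess sum a Birkhoff sum of `f - β(f, T)`. Along periodic orbits it is nonpositive, and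
`Ω(f, T)` is a single periodic orbit exactly when some periodic orbit contains all periodic
points of excess sum above some `-c < 0` (`MaxErg.omega_eq`, `MaxErg.gap`). This criterion is
stable under perturbation (`MaxErg.stable`). A periodic orbit of the perturbed system with excess
sum near `0` satisfies, by a Lipschitz sub-action, the same bound on all its segments. By the
pigeonhole principle it has nearly closed segments of bounded length in every time window of
bounded length. Closing these up under the unperturbed map gives periodic orbits of excess
sum above the gap, so they lie on the original orbit. Hence the perturbed orbit stays close to
the original one all the time (`MaxErg.near_orbit`), and expansiveness identifies it with the
continuation of that orbit (`MaxErg.track`).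
-/

open MeasureTheory Topology Filter Set
open scoped UniformConvergence

noncomputable section

/-- The circle `ℝ/ℤ`. -/
abbrev Circle1 : Type := AddCircle (1 : ℝ)

/-- The canonical representative in `[0,1)` of a point of `ℝ/ℤ`. -/
noncomputable def rep (z : Circle1) : ℝ := (AddCircle.equivIco 1 0 z : ℝ)

/-- The circle map induced by a lift `F : ℝ → ℝ`. -/
noncomputable def cmap (F : ℝ → ℝ) : Circle1 → Circle1 := fun z => ((F (rep z) : ℝ) : Circle1)

/-- The data determining the `C^r` topology: all derivatives of order `≤ r`, viewed in the
space of functions `ℝ → ℝ` with the uniform-convergence topology. -/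
noncomputable def crSeq (r : ℕ∞) (f : ℝ → ℝ) : ℕ → (ℝ →ᵤ ℝ) :=
  fun k => UniformFun.ofFun (if (k : ℕ∞) ≤ r then iteratedDeriv k f else 0)

/-- The space `𝓒^r` of `C^r` functions `ℝ/ℤ → ℝ`. -/
def CrFun (r : ℕ∞) : Type := {f : Circle1 → ℝ // ContDiff ℝ r fun x : ℝ => f ↑x}

/-- The `C^r` topology on `𝓒^r`. -/
noncomputable instance (r : ℕ∞) : TopologicalSpace (CrFun r) :=
  TopologicalSpace.induced (fun f : CrFun r => crSeq r fun x : ℝ => f.1 ↑x) inferInstance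

/-- `F : ℝ → ℝ` is a lift of a `C^r` expanding circle map: it is `C^r`, sends `x+1` to
`F x + d` for a fixed integer `d`, and `|(Fⁿ)'| ≥ C λⁿ` for some `C > 0`, `λ > 1`. -/
def ExpandingLift (r : ℕ∞) (F : ℝ → ℝ) : Prop :=
  ContDiff ℝ r F ∧ (∃ d : ℤ, ∀ x : ℝ, F (x + 1) = F x + d) ∧
    ∃ C > (0 : ℝ), ∃ l > (1 : ℝ), ∀ n : ℕ, 1 ≤ n → ∀ x : ℝ, C * l ^ n ≤ |deriv (F^[n]) x|

/-- The space `𝓔^r` of (lifts of) `C^r` expanding circle maps, with the `C^r` topology. -/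
def ExpMap (r : ℕ∞) : Type := {F : ℝ → ℝ // ExpandingLift r F}

noncomputable instance (r : ℕ∞) : TopologicalSpace (ExpMap r) :=
  TopologicalSpace.induced (fun F : ExpMap r => crSeq r F.1) inferInstance

/-- `μ` is a `T`-invariant Borel probability measure. -/
def InvProb (T : Circle1 → Circle1) (μ : Measure Circle1) : Prop :=
  IsProbabilityMeasure μ ∧ μ.map T = μ

/-- `β(f,T)`, the maximal ergodic average. -/
noncomputable def beta (f : Circle1 → ℝ) (T : Circle1 → Circle1) : ℝ :=
  sSup ((fun μ : Measure Circle1 => ∫ x, f x ∂μ) '' {μ | InvProb T μ})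

/-- `μ` is a maximizing measure for `(f,T)`. -/
def IsMaximizing (f : Circle1 → ℝ) (T : Circle1 → Circle1) (μ : Measure Circle1) : Prop :=
  InvProb T μ ∧ ∫ x, f x ∂μ = beta f T

/-- `μ` is a periodic measure: an invariant measure supported on a periodic orbit. -/
def IsPeriodicMeasure (T : Circle1 → Circle1) (μ : Measure Circle1) : Prop :=
  InvProb T μ ∧ ∃ x : Circle1, ∃ n : ℕ, 0 < n ∧ T^[n] x = x ∧
    μ (Set.range fun k : ℕ => T^[k] x) = 1

/-- `(f,T)` is uniquely maximized by a periodic measure. -/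
def UniqMaxPeriodic (f : Circle1 → ℝ) (T : Circle1 → Circle1) : Prop :=
  ∃ μ : Measure Circle1, IsMaximizing f T μ ∧ IsPeriodicMeasure T μ ∧
    ∀ ν : Measure Circle1, IsMaximizing f T ν → ν = μ

/-- A (continuous) sub-action for `(f,T)`. -/
def IsSubaction (f : Circle1 → ℝ) (T : Circle1 → Circle1) (g : Circle1 → ℝ) : Prop :=
  Continuous g ∧ ∀ x, g x + f x ≤ g (T x) + beta f T

/-- A calibrated sub-action for `(f,T)`. -/
def IsCalibrated (f : Circle1 → ℝ) (T : Circle1 → Circle1) (g : Circle1 → ℝ) : Prop :=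
  IsSubaction f T g ∧ ∀ x, ∃ y, T y = x ∧ g y + f y = g x + beta f T

/-- `G_{f,T}`: the set of Lipschitz calibrated sub-actions of `(f,T)`. -/
def Gset (f : Circle1 → ℝ) (T : Circle1 → Circle1) : Set (Circle1 → ℝ) :=
  {g | (∃ K : NNReal, LipschitzWith K g) ∧ IsCalibrated f T g}

/-- The set `E_{f,T,g}`. -/
def Eset (f : Circle1 → ℝ) (T : Circle1 → Circle1) (g : Circle1 → ℝ) : Set Circle1 :=
  {x | g x + f x = g (T x) + beta f T}

/-- The set `Λ*_{f,T,g}`. -/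
def LambdaStar (f : Circle1 → ℝ) (T : Circle1 → Circle1) (g : Circle1 → ℝ) : Set Circle1 :=
  {x | ∀ n : ℕ, T^[n] x ∈ Eset f T g}

/-- The set `Λ_{f,T,g}`. -/
def Lambda (f : Circle1 → ℝ) (T : Circle1 → Circle1) (g : Circle1 → ℝ) : Set Circle1 :=
  ⋂ n : ℕ, T^[n] '' LambdaStar f T g

/-- The set `K(f,T)`. -/
def Kset (f : Circle1 → ℝ) (T : Circle1 → Circle1) : Set Circle1 :=
  ⋃ g ∈ Gset f T, Lambda f T g

/-- The `(f,T)`-non-wandering set `Ω(f,T)`. -/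
def OmegaSet (f : Circle1 → ℝ) (T : Circle1 → Circle1) : Set Circle1 :=
  {x | ∀ ε > (0 : ℝ), ∃ n : ℕ, 1 ≤ n ∧ ∃ z : Circle1, T^[n] z = x ∧ dist z x < ε ∧
    |∑ i ∈ Finset.range n, (f (T^[i] z) - beta f T)| < ε}

/-- `A` is a periodic orbit of `T`. -/
def IsPeriodicOrbit (T : Circle1 → Circle1) (A : Set Circle1) : Prop :=
  ∃ x : Circle1, (∃ n : ℕ, 0 < n ∧ T^[n] x = x) ∧ A = Set.range fun k : ℕ => T^[k] x

/-- `A` is a `T`-minimal set: a nonempty compact invariant set with no proper nonempty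
compact invariant subset. -/
def IsMinimalSet (T : Circle1 → Circle1) (A : Set Circle1) : Prop :=
  A.Nonempty ∧ IsCompact A ∧ T '' A ⊆ A ∧
    ∀ B ⊆ A, B.Nonempty → IsCompact B → T '' B ⊆ B → B = A

/-- The space of `C^r` families of functions on the circle with `q` parameters,
i.e. maps `(t,x) ↦ f_t(x)` that are jointly `C^r` (the circle variable via a lift). -/
def FamFun (r : ℕ∞) (q : ℕ) : Type :=
  {G : ((Fin q → ℝ) × ℝ) → ℝ // ContDiff ℝ r G ∧ ∀ t x, G (t, x + 1) = G (t, x)}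

noncomputable def famSeq (r : ℕ∞) (q : ℕ) (G : ((Fin q → ℝ) × ℝ) → ℝ) :
    (k : ℕ) → (((Fin q → ℝ) × ℝ) →ᵤ (((Fin q → ℝ) × ℝ) [×k]→L[ℝ] ℝ)) :=
  fun k => UniformFun.ofFun (if (k : ℕ∞) ≤ r then iteratedFDeriv ℝ k G else 0)

/-- The `C^r` topology on the space of `C^r` families. -/
noncomputable instance (r : ℕ∞) (q : ℕ) : TopologicalSpace (FamFun r q) :=
  TopologicalSpace.induced (fun G : FamFun r q => famSeq r q G.1) inferInstance

/-- The member `f_t : ℝ/ℤ → ℝ` of a family, at the parameter `t`. -/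
noncomputable def famMem {r : ℕ∞} {q : ℕ} (G : FamFun r q) (t : Fin q → ℝ) : Circle1 → ℝ :=
  fun z => G.1 (t, rep z)

/-- The product `m_∞` over `ℕ` of Lebesgue measure on `[0,1]`, realised as the pushforward of
the Haar probability measure of the compact group `(ℝ/ℤ)^ℕ` under the coordinatewise choice of
representatives in `[0,1)`. -/
noncomputable def mInfty : Measure (ℕ → ℝ) :=
  Measure.map (fun (t : ℕ → Circle1) (n : ℕ) => rep (t n))
    (MeasureTheory.Measure.addHaarMeasure (⊤ : TopologicalSpace.PositiveCompacts (ℕ → Circle1)))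

/-- `S` is an `N`-dimensionally shy subset of a normed real vector space `V`. -/
def NDimShy {V : Type*} [NormedAddCommGroup V] [NormedSpace ℝ V] (N : ℕ) (S : Set V) : Prop :=
  ∃ φ : Fin N → V, ∀ f : V,
    volume {t : Fin N → ℝ | (∀ i, t i ∈ Set.Icc (0 : ℝ) 1) ∧ f + ∑ i, t i • φ i ∈ S} = 0

/-- `S` is a finite dimensionally shy subset of a normed real vector space `V`. -/
def FinDimShy {V : Type*} [NormedAddCommGroup V] [NormedSpace ℝ V] (S : Set V) : Prop :=
  ∃ N : ℕ, 0 < N ∧ NDimShy N S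

/-- `S` is a shy subset of `V`: there are a compactly supported Borel probability measure `μ`
on `V` and a Borel set `S̃ ⊇ S` all of whose translates are `μ`-null. -/
def IsShy {V : Type*} [NormedAddCommGroup V] [NormedSpace ℝ V] (S : Set V) : Prop :=
  letI : MeasurableSpace V := borel V
  ∃ μ : Measure V, μ Set.univ = 1 ∧ (∃ K : Set V, IsCompact K ∧ μ K = 1) ∧
    ∃ St : Set V, MeasurableSet St ∧ S ⊆ St ∧
      ∀ v : V, μ ((fun x => x + v) ⁻¹' St) = 0

/-- `S` is a prevalent subset of `V`. -/
def IsPrevalent {V : Type*} [NormedAddCommGroup V] [NormedSpace ℝ V] (S : Set V) : Prop :=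
  IsShy Sᶜ

/-- `F` is the (normalized) lift of an orientation-preserving real analytic expanding circle
map of degree `d` fixing `π(0)`. -/
def AnalyticExpandingLift (F : ℝ → ℝ) (d : ℕ) : Prop :=
  (∀ x : ℝ, AnalyticAt ℝ F x) ∧ (∀ x : ℝ, F (x + 1) = F x + d) ∧ StrictMono F ∧ F 0 = 0 ∧
    2 ≤ d ∧ ∃ C > (0 : ℝ), ∃ l > (1 : ℝ), ∀ n : ℕ, 1 ≤ n → ∀ x : ℝ, C * l ^ n ≤ |deriv (F^[n]) x|

/-- The inverse branches `τ_{i,n} = τ_{i_n} ∘ ⋯ ∘ τ_{i_1}`, where `τ = F⁻¹` and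
`τ_i(x) = τ(x+i)`; the word `i` is indexed from `0`, so `i 0` is the first letter `i_1`. -/
noncomputable def tauIter (F : ℝ → ℝ) {d : ℕ} (i : ℕ → Fin d) : ℕ → ℝ → ℝ
  | 0, x => x
  | n + 1, x => Function.invFun F (tauIter F i n x + ((i n : ℕ) : ℝ))

/-- The function `h^f_i` associated to an infinite word `i`. -/
noncomputable def hSum (F : ℝ → ℝ) {d : ℕ} (i : ℕ → Fin d) (f : Circle1 → ℝ) : ℝ → ℝ :=
  fun x => ∑' n : ℕ,
    (f ((tauIter F i (n + 1) x : ℝ) : Circle1) - f ((tauIter F i (n + 1) 0 : ℝ) : Circle1))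

/-- The function `h^f_i` associated to a finite word of length `m` (the first `m` letters
of `i`). -/
noncomputable def hSumFin (F : ℝ → ℝ) {d : ℕ} (i : ℕ → Fin d) (m : ℕ) (f : Circle1 → ℝ) :
    ℝ → ℝ :=
  fun x => ∑ n ∈ Finset.range m,
    (f ((tauIter F i (n + 1) x : ℝ) : Circle1) - f ((tauIter F i (n + 1) 0 : ℝ) : Circle1))

/-- `i ∈ CL(x,K)`: all backward images of `x` along the word `i` lie over `K`. -/
def WordIn (F : ℝ → ℝ) {d : ℕ} (i : ℕ → Fin d) (x : ℝ) (K : Set Circle1) : Prop :=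
  ∀ n : ℕ, 1 ≤ n → ((tauIter F i n x : ℝ) : Circle1) ∈ K

/-- `x` (a real, lying over `K`) is an `f`-supercritical value of `K`. -/
def IsSupercriticalValue (F : ℝ → ℝ) (d : ℕ) (f : Circle1 → ℝ) (K : Set Circle1) (x : ℝ) :
    Prop :=
  ((x : ℝ) : Circle1) ∈ K ∧ ∃ i j : ℕ → Fin d, WordIn F i x K ∧ WordIn F j x K ∧ i 0 ≠ j 0 ∧
    deriv (hSum F i f) x = deriv (hSum F j f) x

/-- `x` is a critical value of `T|K`. -/
def IsCriticalValue (T : Circle1 → Circle1) (K : Set Circle1) (x : Circle1) : Prop :=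
  x ∈ K ∧ ∃ y z, y ∈ K ∧ z ∈ K ∧ y ≠ z ∧ T y = x ∧ T z = x

/-- A critical value `x` of `T|K` is regular: on each side of `x` there is a continuous
inverse branch of `T` selecting the unique preimage in `K`. -/
def IsRegularCriticalValue (T : Circle1 → Circle1) (K : Set Circle1) (x : Circle1) : Prop :=
  ∃ U : Set Circle1, U ∈ 𝓝 x ∧ IsConnected U ∧
    ∀ b ∈ U \ {x}, ∃ s : Circle1 → Circle1,
      ContinuousOn s (connectedComponentIn (U \ {x}) b) ∧
      (∀ y ∈ connectedComponentIn (U \ {x}) b, T (s y) = y) ∧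
      (∀ y ∈ K ∩ connectedComponentIn (U \ {x}) b, T ⁻¹' {y} ∩ K = {s y})

/-- `T|K` is Sturmian-like: every critical value is regular. -/
def SturmianLike (T : Circle1 → Circle1) (K : Set Circle1) : Prop :=
  ∀ x, IsCriticalValue T K x → IsRegularCriticalValue T K x

/-- `f : ℝ/ℤ → ℝ` is a trigonometric polynomial. -/
def IsTrigPoly (f : Circle1 → ℝ) : Prop :=
  ∃ m : ℕ, ∃ a b : ℕ → ℝ, ∀ x : ℝ,
    f ↑x = a 0 + ∑ k ∈ Finset.range m,
      (a (k + 1) * Real.cos (2 * Real.pi * (k + 1) * x) +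
        b (k + 1) * Real.sin (2 * Real.pi * (k + 1) * x))

end

namespace MaxErg

/-! ### Uniformly expanding systems on the circle -/

/-- The consequences of uniform expansion used below, with explicit constants: `T` is
`A`-Lipschitz, orbit segments can be pulled back (`pull`) and closed up (`close`) with
errors controlled by `A`, both uniformly and in sum along the segment, and `T` is expansive
with constant `r`. -/
structure Sys (A r : ℝ) (T : Circle1 → Circle1) : Prop where
  one_le : 1 ≤ A
  r_pos : 0 < r
  lip : ∀ x y, dist (T x) (T y) ≤ A * dist x y
  pull : ∀ (x : Circle1) (n : ℕ) (u : Circle1), ∃ w, T^[n] w = u ∧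
    (∀ i ≤ n, dist (T^[i] w) (T^[i] x) ≤ A * dist u (T^[n] x)) ∧
    ∑ i ∈ Finset.range n, dist (T^[i] w) (T^[i] x) ≤ A * dist u (T^[n] x)
  close : ∀ (x : Circle1) (n : ℕ), 1 ≤ n → ∃ w, T^[n] w = w ∧
    (∀ i ≤ n, dist (T^[i] w) (T^[i] x) ≤ A * dist (T^[n] x) x) ∧
    ∑ i ∈ Finset.range n, dist (T^[i] w) (T^[i] x) ≤ A * dist (T^[n] x) x
  expansive : ∀ x y, (∀ i, dist (T^[i] x) (T^[i] y) ≤ r) → x = y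

/-- `f` is `A`-Lipschitz. -/
def LipF (A : ℝ) (f : Circle1 → ℝ) : Prop := ∀ x y, |f x - f y| ≤ A * dist x y

/-- The excess sum: the Birkhoff sum of `f - β(f,T)`. -/
noncomputable def esum (f : Circle1 → ℝ) (T : Circle1 → Circle1) (n : ℕ) (x : Circle1) : ℝ :=
  birkhoffSum T (fun x => f x - beta f T) n x

variable {A r : ℝ} {T : Circle1 → Circle1} {f : Circle1 → ℝ}

lemma LipF.continuous (hf : LipF A f) : Continuous f := by
  refine (LipschitzWith.of_dist_le_mul (K := A.toNNReal) fun x y => ?_).continuous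
  rw [Real.dist_eq]
  exact (hf x y).trans (mul_le_mul_of_nonneg_right (Real.le_coe_toNNReal A) dist_nonneg)

lemma Sys.continuous (hT : Sys A r T) : Continuous T := by
  refine (LipschitzWith.of_dist_le_mul (K := A.toNNReal) fun x y => ?_).continuous
  exact (hT.lip x y).trans (mul_le_mul_of_nonneg_right (Real.le_coe_toNNReal A) dist_nonneg)

lemma dist_le_one (x y : Circle1) : dist x y ≤ 1 := by
  rw [dist_eq_norm]
  have := AddCircle.norm_le_half_period (1 : ℝ) (x := x - y) one_ne_zero
  norm_num at this
  linarith

lemma integrable_of_lip (hf : LipF A f) (μ : Measure Circle1) [IsProbabilityMeasure μ] :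
    Integrable f μ :=
  hf.continuous.integrable_of_hasCompactSupport (HasCompactSupport.of_compactSpace f)

lemma bddAbove_integrals (hf : LipF A f) :
    BddAbove ((fun μ : Measure Circle1 => ∫ x, f x ∂μ) '' {μ | InvProb T μ}) := by
  obtain ⟨C, hC⟩ := (isCompact_univ (X := Circle1)).exists_bound_of_continuousOn
    hf.continuous.continuousOn
  refine ⟨C, ?_⟩
  rintro _ ⟨μ, hμ, rfl⟩
  have := hμ.1
  calc ∫ x, f x ∂μ ≤ ∫ _, C ∂μ :=
        integral_mono (integrable_of_lip hf μ) (integrable_const _)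
          fun x => (le_abs_self _).trans (hC x trivial)
    _ = C := by simp

lemma integral_le_beta (hf : LipF A f) {μ : Measure Circle1} (hμ : InvProb T μ) :
    ∫ x, f x ∂μ ≤ beta f T :=
  le_csSup (bddAbove_integrals hf) ⟨μ, hμ, rfl⟩

/-- The uniform measure on a periodic orbit is invariant, and integrates `f` to the orbit
average. -/
lemma exists_periodic_measure (hT : Continuous T) (hf : LipF A f) {n : ℕ} (hn : 1 ≤ n)
    {y : Circle1} (hy : T^[n] y = y) :
    ∃ μ : Measure Circle1, InvProb T μ ∧ ∫ x, f x ∂μ = (n : ℝ)⁻¹ * birkhoffSum T f n y := by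
  have hn0 : (n : ENNReal) ≠ 0 := by
    simp only [ne_eq, Nat.cast_eq_zero]
    omega
  refine ⟨(n : ENNReal)⁻¹ • ∑ i ∈ Finset.range n, Measure.dirac (T^[i] y), ⟨⟨?_⟩, ?_⟩, ?_⟩
  · simp [ENNReal.inv_mul_cancel hn0 (ENNReal.natCast_ne_top n)]
  · rw [Measure.map_smul, Measure.map_finset_sum hT.measurable.aemeasurable]
    congr 1
    simp_rw [Measure.map_dirac' hT.measurable, ← Function.iterate_succ_apply' T]
    have h1 := Finset.sum_range_succ (fun i => Measure.dirac (T^[i] y)) n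
    rw [Finset.sum_range_succ'] at h1
    simp only [hy, Function.iterate_zero, id] at h1
    ext s hs
    have h2 := congrArg (fun m : Measure Circle1 => m s) h1
    simp only [Measure.add_apply] at h2
    exact (ENNReal.add_left_inj (measure_ne_top (Measure.dirac y) s)).1 h2
  · rw [integral_smul_measure, integral_finsetSum_measure]
    · simp [birkhoffSum]
    · intro i _
      exact integrable_of_lip hf _

lemma esum_eq (n : ℕ) (x : Circle1) :
    esum f T n x = birkhoffSum T f n x - n * beta f T := by
  simp [esum, birkhoffSum, Finset.sum_sub_distrib]

lemma esum_add (m n : ℕ) (x : Circle1) :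
    esum f T (m + n) x = esum f T m x + esum f T n (T^[m] x) := birkhoffSum_add ..

lemma esum_periodic_nonpos (hT : Continuous T) (hf : LipF A f) {n : ℕ} (hn : 1 ≤ n)
    {y : Circle1} (hy : T^[n] y = y) : esum f T n y ≤ 0 := by
  obtain ⟨μ, hμ, h⟩ := exists_periodic_measure hT hf hn hy
  have h1 := integral_le_beta hf hμ
  have hn' : (0 : ℝ) < n := by exact_mod_cast hn
  rw [h, inv_mul_le_iff₀ hn'] at h1
  rw [esum_eq]
  linarith

lemma esum_diff (hf : LipF A f) (n : ℕ) (x y : Circle1) :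
    |esum f T n x - esum f T n y| ≤
      A * ∑ i ∈ Finset.range n, dist (T^[i] x) (T^[i] y) := by
  unfold esum birkhoffSum
  rw [← Finset.sum_sub_distrib, Finset.mul_sum]
  refine (Finset.abs_sum_le_sum_abs _ _).trans (Finset.sum_le_sum fun i _ => ?_)
  rw [sub_sub_sub_cancel_right]
  exact hf _ _

/-- Closing up an orbit segment, with control of the Birkhoff sum. -/
lemma close_esum (hT : Sys A r T) (hf : LipF A f) (x : Circle1) {n : ℕ} (hn : 1 ≤ n) :
    ∃ w, T^[n] w = w ∧ (∀ i ≤ n, dist (T^[i] w) (T^[i] x) ≤ A * dist (T^[n] x) x) ∧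
      |esum f T n w - esum f T n x| ≤ A ^ 2 * dist (T^[n] x) x := by
  obtain ⟨w, h1, h2, h3⟩ := hT.close x n hn
  refine ⟨w, h1, h2, (esum_diff hf n w x).trans ?_⟩
  rw [pow_two, mul_assoc]
  exact mul_le_mul_of_nonneg_left h3 (by linarith [hT.one_le])

lemma pull_esum (hT : Sys A r T) (hf : LipF A f) (x : Circle1) (n : ℕ) (u : Circle1) :
    ∃ w, T^[n] w = u ∧ (∀ i ≤ n, dist (T^[i] w) (T^[i] x) ≤ A * dist u (T^[n] x)) ∧
      |esum f T n w - esum f T n x| ≤ A ^ 2 * dist u (T^[n] x) := by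
  obtain ⟨w, h1, h2, h3⟩ := hT.pull x n u
  refine ⟨w, h1, h2, (esum_diff hf n w x).trans ?_⟩
  rw [pow_two, mul_assoc]
  exact mul_le_mul_of_nonneg_left h3 (by linarith [hT.one_le])

lemma esum_le (hT : Sys A r T) (hf : LipF A f) (n : ℕ) (x : Circle1) :
    esum f T n x ≤ A ^ 2 := by
  rcases Nat.eq_zero_or_pos n with rfl | hn
  · simp only [esum, birkhoffSum_zero]
    positivity
  · obtain ⟨w, h1, -, h3⟩ := close_esum hT hf x hn
    have h4 := esum_periodic_nonpos hT.continuous hf hn h1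
    have h5 := (abs_le.1 h3).1
    nlinarith [dist_le_one (T^[n] x) x, sq_nonneg A]

/-! ### Sub-actions -/

/-- A Lipschitz sub-action: the supremum of the excess sums over all backward orbit segments
ending at `x`. -/
lemma exists_subaction (hT : Sys A r T) (hf : LipF A f) :
    ∃ g : Circle1 → ℝ, LipF (A ^ 2) g ∧ ∀ x, g x + (f x - beta f T) ≤ g (T x) := by
  set V : Circle1 → Set ℝ := fun x => {s | ∃ n z, T^[n] z = x ∧ s = esum f T n z} with hV
  have hbdd : ∀ x, BddAbove (V x) := by
    intro x
    refine ⟨A ^ 2, ?_⟩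
    rintro _ ⟨n, z, -, rfl⟩
    exact esum_le hT hf n z
  have hne : ∀ x, (V x).Nonempty := fun x => ⟨_, 0, x, rfl, rfl⟩
  refine ⟨fun x => sSup (V x), ?_, ?_⟩
  · have key : ∀ x y, sSup (V x) ≤ sSup (V y) + A ^ 2 * dist x y := by
      intro x y
      refine csSup_le (hne x) ?_
      rintro _ ⟨n, z, hz, rfl⟩
      obtain ⟨w, h1, -, h3⟩ := pull_esum hT hf z n y
      rw [hz, dist_comm] at h3
      have h4 : esum f T n w ≤ sSup (V y) := le_csSup (hbdd y) ⟨n, w, h1, rfl⟩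
      linarith [(abs_le.1 h3).1]
    intro x y
    rw [abs_le]
    have h1 := key x y
    have h2 := key y x
    rw [dist_comm] at h2
    constructor <;> linarith
  · intro x
    rw [← le_sub_iff_add_le]
    refine csSup_le (hne x) ?_
    rintro _ ⟨n, z, hz, rfl⟩
    rw [le_sub_iff_add_le]
    refine le_csSup (hbdd _) ⟨n + 1, z, ?_, ?_⟩
    · rw [Function.iterate_succ_apply', hz]
    · rw [esum, esum, birkhoffSum_succ, hz]

/-- The excess sums of the normalised function `f - β + g - g ∘ T`. -/
noncomputable def nsum (f : Circle1 → ℝ) (T : Circle1 → Circle1) (g : Circle1 → ℝ) (n : ℕ)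
    (x : Circle1) : ℝ := esum f T n x + g x - g (T^[n] x)

lemma nsum_add (g : Circle1 → ℝ) (m n : ℕ) (x : Circle1) :
    nsum f T g (m + n) x = nsum f T g m x + nsum f T g n (T^[m] x) := by
  simp only [nsum, esum_add, ← Function.iterate_add_apply, add_comm n m]
  ring

lemma nsum_nonpos {g : Circle1 → ℝ} (hg : ∀ x, g x + (f x - beta f T) ≤ g (T x)) (n : ℕ)
    (x : Circle1) : nsum f T g n x ≤ 0 := by
  induction n with
  | zero => simp [nsum, esum]
  | succ n ih =>
    rw [nsum_add]
    have := hg (T^[n] x)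
    have h : nsum f T g 1 (T^[n] x) ≤ 0 := by
      simp only [nsum, esum, birkhoffSum_one, Function.iterate_one]
      linarith
    linarith

/-- A sub-segment of an orbit segment has larger normalised sum. -/
lemma nsum_le_sub {g : Circle1 → ℝ} (hg : ∀ x, g x + (f x - beta f T) ≤ g (T x)) {n i m : ℕ}
    (h : i + m ≤ n) (x : Circle1) : nsum f T g n x ≤ nsum f T g m (T^[i] x) := by
  obtain ⟨k, rfl⟩ := Nat.exists_eq_add_of_le h
  rw [nsum_add, nsum_add]
  linarith [nsum_nonpos hg i x, nsum_nonpos hg k (T^[i + m] x)]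

/-- Uniform pigeonhole principle on the circle. -/
lemma pigeonhole {ε : ℝ} (hε : 0 < ε) :
    ∃ N : ℕ, ∀ u : ℕ → Circle1, ∃ i j, i < j ∧ j ≤ N ∧ dist (u i) (u j) < ε := by
  obtain ⟨t, ht, hcov⟩ := Metric.totallyBounded_iff.1
    (isCompact_univ (X := Circle1)).totallyBounded (ε / 2) (half_pos hε)
  have hc : ∀ x : Circle1, ∃ y ∈ t, dist x y < ε / 2 := by
    intro x
    simpa using hcov (mem_univ x)
  choose c hct hcd using hc
  refine ⟨ht.toFinset.card, fun u => ?_⟩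
  obtain ⟨i, hi, j, hj, hij, he⟩ := Finset.exists_ne_map_eq_of_card_lt_of_maps_to
    (s := Finset.range (ht.toFinset.card + 1)) (t := ht.toFinset) (by simp)
    (f := fun i => c (u i)) (fun i _ => by simpa using hct (u i))
  have hd : dist (u i) (u j) < ε := by
    have h1 := hcd (u i)
    have h2 := hcd (u j)
    rw [← he] at h2
    linarith [dist_triangle_right (u i) (u j) (c (u i))]
  simp only [Finset.mem_range] at hi hj
  rcases lt_or_gt_of_ne hij with h | h
  · exact ⟨i, j, h, by omega, hd⟩
  · exact ⟨j, i, h, by omega, by rwa [dist_comm]⟩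

lemma integral_iterate {μ : Measure Circle1} (hμ : InvProb T μ) (hT : Continuous T)
    {g : Circle1 → ℝ} (hg : Continuous g) (n : ℕ) :
    ∫ x, g (T^[n] x) ∂μ = ∫ x, g x ∂μ := by
  induction n with
  | zero => rfl
  | succ n ih =>
    simp_rw [Function.iterate_succ_apply]
    rw [← ih]
    conv_rhs => rw [← hμ.2]
    rw [integral_map hT.measurable.aemeasurable]
    exact (hg.comp (hT.iterate n)).aestronglyMeasurable

/-- There are periodic orbits whose (nonpositive) excess sum is arbitrarily close to `0`:
otherwise, by the pigeonhole principle and closing, every orbit segment of some fixed length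
has normalised sum at most a negative constant, and integrating shows that all invariant
measures stay away from `β`. -/
lemma exists_nearly_maximal (hT : Sys A r T) (hf : LipF A f) {c : ℝ} (hc : 0 < c) :
    ∃ y n, 1 ≤ n ∧ T^[n] y = y ∧ -c < esum f T n y := by
  by_contra! hcon
  obtain ⟨g, hgl, hg⟩ := exists_subaction hT hf
  obtain ⟨ε, hε, hεc⟩ := exists_pos_mul_lt (half_pos hc) (2 * A ^ 2)
  obtain ⟨N, hN⟩ := pigeonhole hε
  have hneg : ∀ x, nsum f T g N x ≤ -(c / 2) := by
    intro x
    obtain ⟨i, j, hij, hjN, hd⟩ := hN fun i => T^[i] x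
    obtain ⟨m, rfl⟩ := Nat.exists_eq_add_of_lt hij
    have hit : T^[m + 1] (T^[i] x) = T^[i + m + 1] x := by
      rw [← Function.iterate_add_apply]
      congr 1
      omega
    refine (nsum_le_sub hg (i := i) (m := m + 1) (by omega) x).trans ?_
    obtain ⟨w, h1, -, h3⟩ := close_esum hT hf (T^[i] x) (n := m + 1) (by omega)
    have h4 := hcon w (m + 1) (by omega) h1
    have h5 := hgl (T^[i] x) (T^[i + m + 1] x)
    have h6 := (abs_le.1 h3).1
    rw [hit, dist_comm] at h6
    rw [nsum, hit]
    have h7 := (abs_le.1 h5).2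
    nlinarith [sq_nonneg A]
  have hN0 : 0 < N := by
    obtain ⟨i, j, hij, hjN, -⟩ := hN fun _ => 0
    omega
  have hN' : (0 : ℝ) < N := by exact_mod_cast hN0
  have hne : ((fun μ : Measure Circle1 => ∫ x, f x ∂μ) '' {μ | InvProb T μ}).Nonempty := by
    obtain ⟨w, hw, -⟩ := hT.close 0 1 le_rfl
    obtain ⟨μ, hμ, -⟩ := exists_periodic_measure hT.continuous hf le_rfl hw
    exact ⟨_, μ, hμ, rfl⟩
  have hle : beta f T ≤ beta f T - c / (2 * N) := by
    refine csSup_le hne ?_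
    rintro _ ⟨μ, hμ, rfl⟩
    have := hμ.1
    have hcont := hT.continuous
    have hInt : ∀ {h : Circle1 → ℝ}, Continuous h → Integrable h μ := fun hh =>
      hh.integrable_of_hasCompactSupport (HasCompactSupport.of_compactSpace _)
    have h1 : ∫ x, nsum f T g N x ∂μ = N * (∫ x, f x ∂μ) - N * beta f T := by
      simp only [nsum, esum_eq, birkhoffSum]
      have ha : Integrable (fun x => ∑ k ∈ Finset.range N, f (T^[k] x)) μ :=
        integrable_finsetSum _ fun i _ => hInt (hf.continuous.comp (hcont.iterate i))
      rw [integral_sub, integral_add, integral_sub, integral_finsetSum]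
      · simp only [integral_iterate hμ hcont hf.continuous,
          integral_iterate hμ hcont hgl.continuous]
        simp
      · exact fun i _ => hInt (hf.continuous.comp (hcont.iterate i))
      · exact ha
      · exact integrable_const _
      · exact ha.sub (integrable_const _)
      · exact hInt hgl.continuous
      · exact (ha.sub (integrable_const _)).add (hInt hgl.continuous)
      · exact hInt (hgl.continuous.comp (hcont.iterate N))
    have hcn : Continuous fun x => nsum f T g N x := by
      simp only [nsum, esum_eq, birkhoffSum]
      have := hf.continuous
      have := hgl.continuous
      refine ((((continuous_finsetSum _ fun i _ =>
        hf.continuous.comp (hcont.iterate i)).sub continuous_const).add hgl.continuous).sub ?_)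
      exact hgl.continuous.comp (hcont.iterate N)
    have h2 : ∫ x, nsum f T g N x ∂μ ≤ ∫ _, -(c / 2) ∂μ :=
      integral_mono (hInt hcn) (integrable_const _) hneg
    rw [h1] at h2
    simp only [integral_const, probReal_univ, smul_eq_mul, one_mul] at h2
    have h3 : c / (2 * N) * N = c / 2 := by field_simp
    nlinarith
  have : 0 < c / (2 * N) := by positivity
  linarith

end MaxErg

namespace MaxErg

/-! ### Periodic orbits and the non-wandering set -/

variable {A r : ℝ} {T : Circle1 → Circle1} {f : Circle1 → ℝ}

lemma iterate_rot {n : ℕ} {y : Circle1} (hy : T^[n] y = y) (i : ℕ) :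
    T^[n] (T^[i] y) = T^[i] y := by
  rw [← Function.iterate_add_apply, add_comm, Function.iterate_add_apply, hy]

lemma esum_rot {n : ℕ} {y : Circle1} (hy : T^[n] y = y) (i : ℕ) :
    esum f T n (T^[i] y) = esum f T n y := by
  have h1 := esum_add (f := f) (T := T) i n y
  have h2 := esum_add (f := f) (T := T) n i y
  rw [hy, add_comm n i] at h2
  linarith

lemma iterate_mul_period {n : ℕ} {y : Circle1} (hy : T^[n] y = y) (k : ℕ) :
    T^[k * n] y = y := by
  induction k with
  | zero => simp
  | succ k ih => rw [Nat.succ_mul, Function.iterate_add_apply, hy, ih]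

lemma esum_mul {n : ℕ} {y : Circle1} (hy : T^[n] y = y) (k : ℕ) :
    esum f T (k * n) y = k * esum f T n y := by
  induction k with
  | zero => simp [esum]
  | succ k ih =>
    rw [Nat.succ_mul, esum_add, iterate_mul_period hy, ih]
    push_cast
    ring

lemma finite_orbit {p : ℕ} (hp : 1 ≤ p) {y : Circle1} (hy : T^[p] y = y) :
    (range fun k : ℕ => T^[k] y).Finite := by
  refine ((Finset.range p).finite_toSet.image fun k => T^[k] y).subset ?_
  rintro _ ⟨k, rfl⟩
  refine ⟨k % p, ?_, Function.IsPeriodicPt.iterate_mod_apply hy k⟩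
  simpa using Nat.mod_lt k hp

/-- If the orbit of `y₀` contains every periodic point whose excess sum is above `-c`, then
the orbit of `y₀` is maximizing and is the whole non-wandering set. -/
lemma omega_eq (hT : Sys A r T) (hf : LipF A f) {y₀ : Circle1} {p : ℕ} (hp : 1 ≤ p)
    (hy₀ : T^[p] y₀ = y₀) {c : ℝ} (hc : 0 < c)
    (H : ∀ y n, 1 ≤ n → T^[n] y = y → -c < esum f T n y → ∃ a, y = T^[a] y₀) :
    esum f T p y₀ = 0 ∧ OmegaSet f T = range fun k : ℕ => T^[k] y₀ := by
  have hp' : (0 : ℝ) < p := by exact_mod_cast hp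
  have hA := hT.one_le
  have hzero : esum f T p y₀ = 0 := by
    by_contra hne
    have hneg : esum f T p y₀ < 0 :=
      lt_of_le_of_ne (esum_periodic_nonpos hT.continuous hf hp hy₀) hne
    have hc' : 0 < min c (-(esum f T p y₀) / p) :=
      lt_min hc (div_pos (by linarith) hp')
    obtain ⟨y, n, hn, hy, hs⟩ := exists_nearly_maximal hT hf hc'
    obtain ⟨a, rfl⟩ := H y n hn hy (by linarith [min_le_left c (-(esum f T p y₀) / p)])
    -- Compare the two ways of computing the excess sum over `p * n` steps.
    have h1 := esum_mul (f := f) hy p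
    have h2 := esum_mul (f := f) (iterate_rot hy₀ a) n
    rw [mul_comm n p, esum_rot hy₀] at h2
    have h3 : (p : ℝ) * min c (-(esum f T p y₀) / p) ≤ -(esum f T p y₀) := by
      calc (p : ℝ) * min c (-(esum f T p y₀) / p) ≤ p * (-(esum f T p y₀) / p) :=
            mul_le_mul_of_nonneg_left (min_le_right _ _) hp'.le
        _ = _ := by field_simp
    have hn' : (1 : ℝ) ≤ n := by exact_mod_cast hn
    nlinarith
  refine ⟨hzero, Subset.antisymm ?_ ?_⟩
  · intro x hx
    rw [← (finite_orbit hp hy₀).isClosed.closure_eq, Metric.mem_closure_iff]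
    intro ε hε
    obtain ⟨e1, he1, h1⟩ := exists_pos_mul_lt hc (1 + A ^ 2)
    obtain ⟨e2, he2, h2⟩ := exists_pos_mul_lt hε (1 + A)
    obtain ⟨n, hn, z, hz, hd, hs⟩ := hx (min e1 e2) (lt_min he1 he2)
    obtain ⟨w, hw, hwd, hws⟩ := close_esum hT hf z hn
    rw [hz, dist_comm] at hws hwd
    have hs' : |esum f T n z| < min e1 e2 := hs
    have hm1 := min_le_left e1 e2
    have hm2 := min_le_right e1 e2
    obtain ⟨a, ha⟩ := H w n hn hw (by
      have := (abs_le.1 hws).1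
      have := (abs_lt.1 hs').1
      nlinarith [sq_nonneg A])
    refine ⟨w, ⟨a, ha.symm⟩, ?_⟩
    have h0 : dist w z ≤ A * dist x z := by simpa [dist_comm] using hwd 0 (Nat.zero_le _)
    have := dist_triangle_right x w z
    rw [dist_comm z x] at hd
    nlinarith
  · rintro _ ⟨k, rfl⟩ ε hε
    refine ⟨p, hp, T^[k] y₀, iterate_rot hy₀ k, by simpa using hε, ?_⟩
    have h : esum f T p (T^[k] y₀) = 0 := by rw [esum_rot hy₀, hzero]
    change |esum f T p (T^[k] y₀)| < ε
    simpa [h] using hε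

/-! ### Perturbations and tracking of a periodic orbit -/

variable {T₀ : Circle1 → Circle1} {f₀ : Circle1 → ℝ}

lemma iterate_lip (hT : Sys A r T) (n : ℕ) (x y : Circle1) :
    dist (T^[n] x) (T^[n] y) ≤ A ^ n * dist x y := by
  induction n with
  | zero => simp
  | succ n ih =>
    rw [Function.iterate_succ_apply', Function.iterate_succ_apply', pow_succ']
    have := hT.lip (T^[n] x) (T^[n] y)
    have := hT.one_le
    nlinarith

/-- Orbits of nearby maps separate at a controlled rate. -/
lemma iterate_near (hT₀ : Sys A r T₀) {η : ℝ} (hη : 0 ≤ η) (h : ∀ x, dist (T x) (T₀ x) ≤ η)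
    {n L : ℕ} (hn : n ≤ L) (x : Circle1) :
    dist (T^[n] x) (T₀^[n] x) ≤ L * A ^ L * η := by
  have hA := hT₀.one_le
  have key : dist (T^[n] x) (T₀^[n] x) ≤ n * A ^ n * η := by
    clear hn
    induction n with
    | zero => simp
    | succ n ih =>
      rw [Function.iterate_succ_apply', Function.iterate_succ_apply']
      have h1 := dist_triangle (T (T^[n] x)) (T₀ (T^[n] x)) (T₀ (T₀^[n] x))
      have h2 := hT₀.lip (T^[n] x) (T₀^[n] x)
      have h3 := h (T^[n] x)
      have h4 : η ≤ A ^ (n + 1) * η := le_mul_of_one_le_left hη (one_le_pow₀ hA)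
      have h5 : A * dist (T^[n] x) (T₀^[n] x) ≤ A * (n * A ^ n * η) :=
        mul_le_mul_of_nonneg_left ih (by linarith)
      push_cast
      calc _ ≤ A ^ (n + 1) * η + A * (n * A ^ n * η) := by linarith
        _ = _ := by ring
  refine key.trans (mul_le_mul_of_nonneg_right ?_ hη)
  have : (n : ℝ) ≤ L := by exact_mod_cast hn
  have h2 : A ^ n ≤ A ^ L := pow_le_pow_right₀ hA hn
  exact mul_le_mul this h2 (by positivity) (by positivity)

lemma exists_separation {p : ℕ} (hp : 1 ≤ p) {Q : Circle1} (hQ : T₀^[p] Q = Q) :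
    ∃ s > 0, ∀ a b : ℕ, dist (T₀^[a] Q) (T₀^[b] Q) < s → T₀^[a] Q = T₀^[b] Q := by
  have h : ∀ᶠ s in 𝓝[>] (0 : ℝ), ∀ a ∈ Finset.range p, ∀ b ∈ Finset.range p,
      dist (T₀^[a] Q) (T₀^[b] Q) < s → T₀^[a] Q = T₀^[b] Q := by
    refine (Finset.eventually_all _).2 fun a _ => (Finset.eventually_all _).2 fun b _ => ?_
    by_cases hab : T₀^[a] Q = T₀^[b] Q
    · exact Eventually.of_forall fun _ _ => hab
    · filter_upwards [Ioo_mem_nhdsGT (dist_pos.2 hab)] with s hs hd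
      exact absurd hd (not_lt.2 hs.2.le)
  obtain ⟨s, hs, hs0⟩ := (h.and self_mem_nhdsWithin).exists
  refine ⟨s, hs0, fun a b hd => ?_⟩
  have hmod : ∀ a, T₀^[a % p] Q = T₀^[a] Q := Function.IsPeriodicPt.iterate_mod_apply hQ
  rw [← hmod a, ← hmod b] at hd ⊢
  exact hs _ (by simpa using Nat.mod_lt a hp) _ (by simpa using Nat.mod_lt b hp) hd

/-- If the `T`-orbit of `y` stays `δ`-close to the periodic `T₀`-orbit of `Q`, and `y₀`
`κ`-shadows `Q`, then `y` is on the `T`-orbit of `y₀`. -/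
lemma track (hT : Sys A r T) (hT₀ : Sys A r T₀) {Q y₀ : Circle1} {s δ η κ : ℝ}
    (hsep : ∀ a b : ℕ, dist (T₀^[a] Q) (T₀^[b] Q) < s → T₀^[a] Q = T₀^[b] Q)
    (hnear : ∀ x, dist (T x) (T₀ x) ≤ η) (hκ : ∀ i, dist (T^[i] y₀) (T₀^[i] Q) ≤ κ)
    (h1 : δ + A * δ + η < s) (h2 : δ + κ ≤ r) {y : Circle1}
    (hy : ∀ i, ∃ a, dist (T^[i] y) (T₀^[a] Q) ≤ δ) : ∃ a, y = T^[a] y₀ := by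
  have hA := hT.one_le
  choose a ha using hy
  have hstep : ∀ i, T₀^[a i] Q = T₀^[a 0 + i] Q := by
    intro i
    induction i with
    | zero => simp
    | succ i ih =>
      rw [← add_assoc, Function.iterate_succ_apply', ← ih, ← Function.iterate_succ_apply' T₀]
      apply hsep
      have e1 := ha (i + 1)
      have e2 := ha i
      rw [Function.iterate_succ_apply'] at e1 ⊢
      have e3 := hnear (T^[i] y)
      have e4 := hT₀.lip (T^[i] y) (T₀^[a i] Q)
      have e5 : A * dist (T^[i] y) (T₀^[a i] Q) ≤ A * δ :=
        mul_le_mul_of_nonneg_left e2 (by linarith)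
      have e6 := dist_triangle_left (T₀^[a (i + 1)] Q) (T₀ (T₀^[a i] Q)) (T (T^[i] y))
      have e7 := dist_triangle (T (T^[i] y)) (T₀ (T^[i] y)) (T₀ (T₀^[a i] Q))
      linarith
  refine ⟨a 0, hT.expansive _ _ fun i => ?_⟩
  rw [← Function.iterate_add_apply, add_comm i]
  have e1 := ha i
  rw [hstep] at e1
  have e2 := hκ (a 0 + i)
  linarith [dist_triangle_right (T^[i] y) (T^[a 0 + i] y₀) (T₀^[a 0 + i] Q)]

/-- When `Ω(f₀,T₀)` is the orbit of `Q`, every other periodic orbit has excess sum below a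
fixed negative constant. -/
lemma gap (hT₀ : Sys A r T₀) (hf₀ : LipF A f₀) {Q : Circle1} {p : ℕ} (hp : 1 ≤ p)
    (hQ : T₀^[p] Q = Q) (hΩ : OmegaSet f₀ T₀ = range fun k : ℕ => T₀^[k] Q) :
    ∃ c > 0, ∀ y n, 1 ≤ n → T₀^[n] y = y → -c < esum f₀ T₀ n y → ∃ a, y = T₀^[a] Q := by
  have hA := hT₀.one_le
  obtain ⟨s, hs, hsep⟩ := exists_separation hp hQ
  obtain ⟨δ, hδ, h1, h2⟩ : ∃ δ > 0, δ + A * δ + 0 < s ∧ δ + 0 ≤ r := by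
    obtain ⟨e, he, h⟩ := exists_pos_mul_lt hs (1 + A)
    refine ⟨min e r, lt_min he hT₀.r_pos, ?_, by simp⟩
    have := min_le_left e r
    nlinarith
  have hcpt : IsCompact {x : Circle1 | ∀ a, δ ≤ dist x (T₀^[a] Q)} := by
    refine IsClosed.isCompact ?_
    simp only [ofPred_forall]
    exact isClosed_iInter fun a => isClosed_le continuous_const (by fun_prop)
  obtain ⟨c, hc, hcK⟩ : ∃ c > 0, ∀ y ∈ {x : Circle1 | ∀ a, δ ≤ dist x (T₀^[a] Q)}, ∀ n,
      1 ≤ n → T₀^[n] y = y → esum f₀ T₀ n y ≤ -c := by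
    refine hcpt.induction_on (p := fun S => ∃ c > 0, ∀ y ∈ S, ∀ n, 1 ≤ n → T₀^[n] y = y →
      esum f₀ T₀ n y ≤ -c) ⟨1, one_pos, by simp⟩ ?_ ?_ ?_
    · rintro S S' hSS ⟨c, hc, h⟩
      exact ⟨c, hc, fun y hy => h y (hSS hy)⟩
    · rintro S S' ⟨c, hc, h⟩ ⟨c', hc', h'⟩
      refine ⟨min c c', lt_min hc hc', ?_⟩
      rintro y (hy | hy) n hn hyn
      · exact (h y hy n hn hyn).trans (neg_le_neg (min_le_left _ _))
      · exact (h' y hy n hn hyn).trans (neg_le_neg (min_le_right _ _))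
    · intro x hx
      have hxΩ : x ∉ OmegaSet f₀ T₀ := by
        rw [hΩ]
        rintro ⟨a, rfl⟩
        have := hx a
        rw [dist_self] at this
        linarith
      simp only [OmegaSet, mem_ofPred_eq, not_forall] at hxΩ
      obtain ⟨ε, hε, hno⟩ := hxΩ
      obtain ⟨e, he, he'⟩ := exists_pos_mul_lt (half_pos hε) (1 + A + A ^ 2)
      refine ⟨Metric.ball x e, mem_nhdsWithin_of_mem_nhds (Metric.ball_mem_nhds x he), ε / 2,
        half_pos hε, fun y hy n hn hyn => ?_⟩
      by_contra! hlt
      obtain ⟨z, hz, hzd, hzs⟩ := pull_esum hT₀ hf₀ y n x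
      rw [hyn, dist_comm x] at hzd hzs
      rw [Metric.mem_ball] at hy
      refine hno ⟨n, hn, z, hz, ?_, ?_⟩
      · have h0 : dist z y ≤ A * dist y x := by simpa using hzd 0 (Nat.zero_le _)
        have := dist_triangle z y x
        nlinarith [sq_nonneg A]
      · change |esum f₀ T₀ n z| < ε
        have h3 := esum_periodic_nonpos hT₀.continuous hf₀ hn hyn
        rw [abs_le] at hzs
        rw [abs_lt]
        constructor <;> nlinarith [sq_nonneg A]
  refine ⟨c, hc, fun y n hn hyn hlt => ?_⟩
  refine track (κ := 0) (η := 0) hT₀ hT₀ hsep (by simp) (by simp) h1 h2 fun i => ?_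
  by_contra! hfar
  have := hcK (T₀^[i] y) (fun a => (hfar a).le) n hn (iterate_rot hyn i)
  rw [esum_rot hyn] at this
  linarith

end MaxErg

namespace MaxErg

/-! ### Stability under perturbation -/

variable {A r : ℝ} {T T₀ : Circle1 → Circle1} {f f₀ : Circle1 → ℝ}

/-- Continuation of the periodic orbit of `Q` to nearby maps. -/
lemma continuation (hT : Sys A r T) (hT₀ : Sys A r T₀) {Q : Circle1} {p : ℕ} (hp : 1 ≤ p)
    (hQ : T₀^[p] Q = Q) {η : ℝ} (hη : 0 ≤ η) (hnear : ∀ x, dist (T x) (T₀ x) ≤ η) :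
    ∃ y₀, T^[p] y₀ = y₀ ∧ ∀ i, dist (T^[i] y₀) (T₀^[i] Q) ≤ (A + 1) * (p * A ^ p * η) := by
  have hA := hT.one_le
  obtain ⟨y₀, h1, h2, -⟩ := hT.close Q p hp
  refine ⟨y₀, h1, fun i => ?_⟩
  rw [← Function.IsPeriodicPt.iterate_mod_apply h1 i,
    ← Function.IsPeriodicPt.iterate_mod_apply hQ i]
  have hi : i % p ≤ p := (Nat.mod_lt i hp).le
  have e1 := h2 _ hi
  have e2 := iterate_near hT₀ hη hnear hi Q
  have e3 := iterate_near hT₀ hη hnear (le_refl p) Q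
  rw [hQ] at e3
  have e4 := dist_triangle (T^[i % p] y₀) (T^[i % p] Q) (T₀^[i % p] Q)
  nlinarith

/-- Lower semicontinuity of `β` at a system maximized by a periodic orbit. -/
lemma beta_lower (hT : Sys A r T) (hT₀ : Sys A r T₀) (hf : LipF A f) {Q : Circle1}
    {p : ℕ} (hp : 1 ≤ p) (hQ : T₀^[p] Q = Q) (hsum : esum f₀ T₀ p Q = 0) {η : ℝ} (hη : 0 ≤ η)
    (hnear : ∀ x, dist (T x) (T₀ x) ≤ η) (hfn : ∀ x, |f x - f₀ x| ≤ η) :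
    beta f₀ T₀ - (η + A * ((A + 1) * (p * A ^ p * η))) ≤ beta f T := by
  have hA := hT.one_le
  have hp' : (0 : ℝ) < p := by exact_mod_cast hp
  obtain ⟨y₀, h1, h2⟩ := continuation hT hT₀ hp hQ hη hnear
  have h3 := esum_periodic_nonpos hT.continuous hf hp h1
  rw [esum_eq] at h3 hsum
  have h4 : birkhoffSum T₀ f₀ p Q - p * (η + A * ((A + 1) * (p * A ^ p * η)))
      ≤ birkhoffSum T f p y₀ := by
    have : (p : ℝ) * (η + A * ((A + 1) * (p * A ^ p * η))) =
        ∑ _i ∈ Finset.range p, (η + A * ((A + 1) * (p * A ^ p * η))) := by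
      rw [Finset.sum_const, Finset.card_range, nsmul_eq_mul]
    rw [this, birkhoffSum, birkhoffSum, ← Finset.sum_sub_distrib]
    refine Finset.sum_le_sum fun i _ => ?_
    have e1 := (abs_le.1 (hfn (T₀^[i] Q))).1
    have e2 := (abs_le.1 (hf (T^[i] y₀) (T₀^[i] Q))).1
    have e3 : A * dist (T^[i] y₀) (T₀^[i] Q) ≤ A * ((A + 1) * (p * A ^ p * η)) :=
      mul_le_mul_of_nonneg_left (h2 i) (by linarith)
    linarith
  nlinarith

/-- A nearly closed `T`-orbit segment of bounded length is shadowed by a periodic orbit of the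
unperturbed map, with nearly no loss in the excess sum. -/
lemma compare (hT₀ : Sys A r T₀) (hf₀ : LipF A f₀) {Q : Circle1} {p : ℕ} (hp : 1 ≤ p)
    (hQ : T₀^[p] Q = Q) (hsum : esum f₀ T₀ p Q = 0) (L : ℕ) {τ : ℝ} (hτ : 0 < τ) :
    ∃ η > 0, ∀ (T : Circle1 → Circle1) (f : Circle1 → ℝ), Sys A r T → LipF A f →
      (∀ x, dist (T x) (T₀ x) ≤ η) → (∀ x, |f x - f₀ x| ≤ η) →
      ∀ u m, 1 ≤ m → m ≤ L → ∃ w, T₀^[m] w = w ∧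
        esum f T m u - A ^ 2 * dist (T^[m] u) u - τ ≤ esum f₀ T₀ m w ∧
        ∀ l ≤ m, dist (T₀^[l] w) (T^[l] u) ≤ A * dist (T^[m] u) u + τ := by
  have hA := hT₀.one_le
  obtain ⟨η, hη, hητ⟩ := exists_pos_mul_lt hτ (L * (1 + A * (L * A ^ L) +
    (1 + A * ((A + 1) * (p * A ^ p)))) + A ^ 2 * (L * A ^ L) + (A + 1) * (L * A ^ L))
  refine ⟨η, hη, fun T f hT hf hnear hfn u m hm hmL => ?_⟩
  have hβ := beta_lower hT hT₀ hf hp hQ hsum hη.le hnear hfn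
  set E : ℝ := L * A ^ L * η with hE
  have hE0 : 0 ≤ E := by positivity
  set κ : ℝ := η + A * ((A + 1) * (p * A ^ p * η)) with hκ
  have hκ0 : 0 ≤ κ := by positivity
  have hlin : L * (η + A * E + κ) + A ^ 2 * E + (A + 1) * E < τ := by
    rw [hE, hκ]
    linarith
  have hA2 : 0 ≤ A ^ 2 * E := by positivity
  have hA1 : 0 ≤ (A + 1) * E := by positivity
  have hL0 : 0 ≤ L * (η + A * E + κ) := by positivity
  have hd : dist (T₀^[m] u) u ≤ dist (T^[m] u) u + E := by
    have := iterate_near hT₀ hη.le hnear hmL u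
    linarith [dist_triangle_left (T₀^[m] u) u (T^[m] u)]
  obtain ⟨w, h1, h2, h3⟩ := close_esum hT₀ hf₀ u hm
  refine ⟨w, h1, ?_, fun l hl => ?_⟩
  · have h4 : esum f T m u - m * (η + A * E + κ) ≤ esum f₀ T₀ m u := by
      have : (m : ℝ) * (η + A * E + κ) = ∑ _i ∈ Finset.range m, (η + A * E + κ) := by
        rw [Finset.sum_const, Finset.card_range, nsmul_eq_mul]
      rw [this, esum, esum, birkhoffSum, birkhoffSum, ← Finset.sum_sub_distrib]
      refine Finset.sum_le_sum fun i hi => ?_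
      have hi' : i ≤ L := (Finset.mem_range.1 hi).le.trans hmL
      have e1 := (abs_le.1 (hfn (T^[i] u))).2
      have e2 := (abs_le.1 (hf₀ (T^[i] u) (T₀^[i] u))).2
      have e3 : A * dist (T^[i] u) (T₀^[i] u) ≤ A * E :=
        mul_le_mul_of_nonneg_left (iterate_near hT₀ hη.le hnear hi' u) (by linarith)
      linarith
    have h5 : (m : ℝ) * (η + A * E + κ) ≤ L * (η + A * E + κ) :=
      mul_le_mul_of_nonneg_right (by exact_mod_cast hmL) (by positivity)
    have h6 : A ^ 2 * dist (T₀^[m] u) u ≤ A ^ 2 * (dist (T^[m] u) u + E) :=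
      mul_le_mul_of_nonneg_left hd (sq_nonneg A)
    linarith [(abs_le.1 h3).1]
  · have e1 := h2 l hl
    have e2 := iterate_near hT₀ hη.le hnear (hl.trans hmL) u
    have e3 := dist_triangle_right (T₀^[l] w) (T^[l] u) (T₀^[l] u)
    have e4 : A * dist (T₀^[m] u) u ≤ A * (dist (T^[m] u) u + E) :=
      mul_le_mul_of_nonneg_left hd (by linarith)
    linarith

/-- For a perturbed system, every periodic point with excess sum close to `0` is close to the
orbit of `Q`. By the pigeonhole principle the orbit passes close to `Q` within bounded time
both before and after visiting `y`; the orbit segment between these two passages is nearly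
closed, and the gap for the unperturbed system forces it to follow the orbit of `Q`. -/
lemma near_orbit (hT₀ : Sys A r T₀) (hf₀ : LipF A f₀) {Q : Circle1} {p : ℕ} (hp : 1 ≤ p)
    (hQ : T₀^[p] Q = Q) (hsum : esum f₀ T₀ p Q = 0) {c₀ : ℝ} (hc₀ : 0 < c₀)
    (hgap : ∀ y n, 1 ≤ n → T₀^[n] y = y → -c₀ < esum f₀ T₀ n y → ∃ a, y = T₀^[a] Q)
    {δ : ℝ} (hδ : 0 < δ) :
    ∃ η > 0, ∃ c > 0, ∀ (T : Circle1 → Circle1) (f : Circle1 → ℝ), Sys A r T → LipF A f →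
      (∀ x, dist (T x) (T₀ x) ≤ η) → (∀ x, |f x - f₀ x| ≤ η) →
      ∀ y n, 1 ≤ n → T^[n] y = y → -c < esum f T n y → ∃ a, dist y (T₀^[a] Q) ≤ δ := by
  have hA := hT₀.one_le
  -- `e` and `τ` are the tolerances for the final segment, `s` those for the passages near `Q`.
  set τ : ℝ := min δ c₀ / 4 with hτdef
  have hτ : 0 < τ := div_pos (lt_min hδ hc₀) (by norm_num)
  have hτδ : 4 * τ ≤ δ := by linarith [min_le_left δ c₀]
  have hτc : 4 * τ ≤ c₀ := by linarith [min_le_right δ c₀]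
  obtain ⟨e, he, heτ⟩ := exists_pos_mul_lt hτ (2 * A ^ 2 + A)
  obtain ⟨s, hs, hse⟩ := exists_pos_mul_lt (lt_min (half_pos he) (half_pos hc₀))
    (A ^ p * (A + 1) + 1 + (2 * A ^ 2 + 1))
  have hp1 : 0 ≤ A ^ p * (A + 1) * s := by positivity
  have hp2 : 0 ≤ A ^ 2 * s := by positivity
  have hp3 : 0 ≤ A ^ 2 * e := by positivity
  have hp4 : 0 ≤ A * e := by positivity
  have hs1 : A ^ p * (A + 1) * s + s ≤ e / 2 := by
    have := min_le_left (e / 2) (c₀ / 2)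
    linarith
  have hs2 : 2 * A ^ 2 * s + s < c₀ / 2 := by
    have := min_le_right (e / 2) (c₀ / 2)
    linarith
  obtain ⟨N, hN⟩ := pigeonhole hs
  set L : ℕ := 2 * (N + p) + 1 with hL
  have hL' : (0 : ℝ) < L := by positivity
  obtain ⟨η₁, hη₁, H₁⟩ := compare hT₀ hf₀ hp hQ hsum L hs
  obtain ⟨η₂, hη₂, H₂⟩ := compare hT₀ hf₀ hp hQ hsum L hτ
  obtain ⟨η₃, hη₃, H₃⟩ := exists_pos_mul_lt hs (L * A ^ L)
  refine ⟨min η₁ (min η₂ η₃), by positivity, c₀ / 4 / L, by positivity, ?_⟩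
  intro T f hT hf hnear hfn y n hn hy hlt
  have hnear₃ : ∀ x, dist (T x) (T₀ x) ≤ η₃ := fun x =>
    (hnear x).trans ((min_le_right _ _).trans (min_le_right _ _))
  replace H₁ := H₁ T f hT hf (fun x => (hnear x).trans (min_le_left _ _))
    (fun x => (hfn x).trans (min_le_left _ _))
  replace H₂ := H₂ T f hT hf
    (fun x => (hnear x).trans ((min_le_right _ _).trans (min_le_left _ _)))
    (fun x => (hfn x).trans ((min_le_right _ _).trans (min_le_left _ _)))
  obtain ⟨g, hgl, hg⟩ := exists_subaction hT hf
  -- Pass to the period `L * n ≥ L` and to the point `z` of the orbit with `T^[N + p + 1] z = y`.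
  have hLn : L ≤ L * n := Nat.le_mul_of_pos_right L hn
  have hyL := iterate_mul_period hy L
  have hyLs := esum_mul (f := f) hy L
  set z : Circle1 := T^[L * n - (N + p + 1)] y with hz
  have hzy : T^[N + p + 1] z = y := by
    rw [hz, ← Function.iterate_add_apply]
    have : N + p + 1 + (L * n - (N + p + 1)) = L * n := by omega
    rw [this, hyL]
  have hwin : ∀ i m, i + m ≤ L →
      -(c₀ / 4) - A ^ 2 * dist (T^[m] (T^[i] z)) (T^[i] z) ≤ esum f T m (T^[i] z) := by
    intro i m him
    have h1 := nsum_le_sub hg (him.trans hLn) z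
    have h2 : nsum f T g (L * n) z = L * esum f T n y := by
      rw [nsum, hz, iterate_rot hyL, esum_rot hyL, hyLs]
      ring
    have h3 : -(c₀ / 4) < L * esum f T n y := by
      have : (L : ℝ) * (c₀ / 4 / L) = c₀ / 4 := by field_simp
      nlinarith
    have h4 := (abs_le.1 (hgl (T^[m] (T^[i] z)) (T^[i] z))).1
    rw [h2, nsum] at h1
    linarith
  -- Within every time window of length `N + p` the orbit of `z` passes close to `Q`.
  have hret : ∀ b, b + N + p ≤ L → ∃ i, b ≤ i ∧ i ≤ b + N + p ∧ dist (T^[i] z) Q ≤ e / 2 := by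
    intro b hb
    obtain ⟨i, j, hij, hjN, hd⟩ := hN fun i => T^[b + i] z
    obtain ⟨m, rfl⟩ := Nat.exists_eq_add_of_lt hij
    have hit : T^[m + 1] (T^[b + i] z) = T^[b + (i + m + 1)] z := by
      rw [← Function.iterate_add_apply]
      congr 1
      omega
    rw [dist_comm] at hd
    simp only [← hit] at hd
    have h1 := hwin (b + i) (m + 1) (by omega)
    obtain ⟨w, hw1, hw2, hw3⟩ := H₁ (T^[b + i] z) (m + 1) (by omega) (by omega)
    have h2 : A ^ 2 * dist (T^[m + 1] (T^[b + i] z)) (T^[b + i] z) ≤ A ^ 2 * s :=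
      mul_le_mul_of_nonneg_left hd.le (sq_nonneg A)
    have h2' : A * dist (T^[m + 1] (T^[b + i] z)) (T^[b + i] z) ≤ A * s :=
      mul_le_mul_of_nonneg_left hd.le (by linarith)
    obtain ⟨a, rfl⟩ := hgap w (m + 1) (by omega) hw1 (by linarith)
    have h3 := hw3 0 (Nat.zero_le _)
    simp only [Function.iterate_zero, id] at h3
    have hmod := Nat.mod_lt a hp
    have hQk : T₀^[p - a % p] (T₀^[a] Q) = Q := by
      rw [← Function.iterate_add_apply]
      have : p - a % p + a = (a / p + 1) * p := by
        have := Nat.div_add_mod' a p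
        rw [Nat.succ_mul]
        omega
      rw [this, iterate_mul_period hQ]
    refine ⟨p - a % p + (b + i), by omega, by omega, ?_⟩
    rw [Function.iterate_add_apply]
    set k := p - a % p with hk
    have h4 := iterate_lip hT k (T^[b + i] z) (T₀^[a] Q)
    have h5 := iterate_near (n := k) (L := L) hT₀ hη₃.le hnear₃ (by omega) (T₀^[a] Q)
    rw [hQk] at h5
    have h6 := dist_triangle (T^[k] (T^[b + i] z)) (T^[k] (T₀^[a] Q)) Q
    have h7 : A ^ k * dist (T^[b + i] z) (T₀^[a] Q) ≤ A ^ p * ((A + 1) * s) := by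
      refine mul_le_mul (pow_le_pow_right₀ hA (by omega)) ?_ dist_nonneg (by positivity)
      rw [dist_comm]
      linarith
    linarith
  obtain ⟨i₁, -, hi₁, hd₁⟩ := hret 0 (by omega)
  obtain ⟨i₂, hi₂, hi₂', hd₂⟩ := hret (N + p + 1) (by omega)
  have hit : T^[i₂ - i₁] (T^[i₁] z) = T^[i₂] z := by
    rw [← Function.iterate_add_apply]
    congr 1
    omega
  have hd : dist (T^[i₂ - i₁] (T^[i₁] z)) (T^[i₁] z) ≤ e := by
    rw [hit]
    linarith [dist_triangle_right (T^[i₂] z) (T^[i₁] z) Q]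
  have h1 := hwin i₁ (i₂ - i₁) (by omega)
  obtain ⟨w, hw1, hw2, hw3⟩ := H₂ (T^[i₁] z) (i₂ - i₁) (by omega) (by omega)
  have h2 : A ^ 2 * dist (T^[i₂ - i₁] (T^[i₁] z)) (T^[i₁] z) ≤ A ^ 2 * e :=
    mul_le_mul_of_nonneg_left hd (sq_nonneg A)
  have h2' : A * dist (T^[i₂ - i₁] (T^[i₁] z)) (T^[i₁] z) ≤ A * e :=
    mul_le_mul_of_nonneg_left hd (by linarith)
  obtain ⟨a, rfl⟩ := hgap w (i₂ - i₁) (by omega) hw1 (by linarith)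
  have h3 := hw3 (N + p + 1 - i₁) (by omega)
  rw [← Function.iterate_add_apply, ← Function.iterate_add_apply T] at h3
  have : N + p + 1 - i₁ + i₁ = N + p + 1 := by omega
  rw [this, hzy, dist_comm] at h3
  exact ⟨_, h3.trans (by linarith)⟩

/-- Having a periodic orbit as non-wandering set is stable under `C⁰`-small perturbations, as
long as the expansion and Lipschitz constants stay bounded. -/
theorem stable (hT₀ : Sys A r T₀) (hf₀ : LipF A f₀)
    (hΩ : IsPeriodicOrbit T₀ (OmegaSet f₀ T₀)) :
    ∃ η > 0, ∀ (T : Circle1 → Circle1) (f : Circle1 → ℝ), Sys A r T → LipF A f →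
      (∀ x, dist (T x) (T₀ x) ≤ η) → (∀ x, |f x - f₀ x| ≤ η) →
      IsPeriodicOrbit T (OmegaSet f T) := by
  have hA := hT₀.one_le
  obtain ⟨Q, ⟨p, hp, hQ⟩, hΩ⟩ := hΩ
  obtain ⟨c₀, hc₀, hgap⟩ := gap hT₀ hf₀ hp hQ hΩ
  have hsum := (omega_eq hT₀ hf₀ hp hQ hc₀ hgap).1
  obtain ⟨s, hs, hsep⟩ := exists_separation hp hQ
  have hr := hT₀.r_pos
  obtain ⟨δ, hδ, hδs⟩ := exists_pos_mul_lt (lt_min (half_pos hs) (half_pos hr)) (1 + A)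
  have hδ1 : δ + A * δ < s / 2 := by linarith [min_le_left (s / 2) (r / 2)]
  have hδ2 : δ ≤ r / 2 := by
    have : 0 ≤ A * δ := by positivity
    linarith [min_le_right (s / 2) (r / 2)]
  obtain ⟨η₁, hη₁, c, hc, H⟩ := near_orbit hT₀ hf₀ hp hQ hsum hc₀ hgap hδ
  obtain ⟨η₂, hη₂, H₂⟩ := exists_pos_mul_lt (half_pos hr) ((A + 1) * (p * A ^ p))
  refine ⟨min η₁ (min η₂ (s / 2)), by positivity, fun T f hT hf hnear hfn => ?_⟩
  have hn₁ : min η₁ (min η₂ (s / 2)) ≤ η₁ := min_le_left _ _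
  have hn₂ : min η₁ (min η₂ (s / 2)) ≤ η₂ := (min_le_right _ _).trans (min_le_left _ _)
  have hn₃ : min η₁ (min η₂ (s / 2)) ≤ s / 2 := (min_le_right _ _).trans (min_le_right _ _)
  obtain ⟨y₀, hy₀, hκ⟩ := continuation hT hT₀ hp hQ hη₂.le fun x => (hnear x).trans hn₂
  refine ⟨y₀, ⟨p, hp, hy₀⟩, (omega_eq hT hf hp hy₀ hc fun y n hn hy hlt => ?_).2⟩
  refine track (δ := δ) hT hT₀ hsep (fun x => (hnear x).trans hn₃) hκ (by linarith) (by linarith)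
    fun i => ?_
  exact H T f hT hf (fun x => (hnear x).trans hn₁) (fun x => (hfn x).trans hn₁) (T^[i] y) n hn
    (iterate_rot hy i) (by rwa [esum_rot hy])

end MaxErg

namespace MaxErg

/-! ### Circle maps and their lifts -/

lemma rep_coe (x : ℝ) : ∃ k : ℤ, rep (x : Circle1) = x + k := by
  refine ⟨-⌊x⌋, ?_⟩
  have h : rep (x : Circle1) = Int.fract (x / 1) * 1 := AddCircle.coe_equivIco_mk_apply 1 x
  rw [h, div_one, mul_one, Int.fract]
  push_cast
  ring

lemma coe_rep (z : Circle1) : ((rep z : ℝ) : Circle1) = z :=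
  (AddCircle.equivIco 1 0).symm_apply_apply z

lemma coe_add_int (x : ℝ) (k : ℤ) : ((x + k : ℝ) : Circle1) = x := by
  rw [AddCircle.coe_add, add_eq_left]
  exact (AddCircle.coe_eq_zero_iff 1).2 ⟨k, by simp⟩

lemma dist_coe_le (x y : ℝ) : dist (x : Circle1) y ≤ |x - y| := by
  rw [dist_eq_norm, ← AddCircle.coe_sub, UnitAddCircle.norm_eq]
  simpa using round_le (x - y) 0

lemma exists_int_dist (x y : ℝ) : ∃ k : ℤ, dist (x : Circle1) y = |x - y - k| :=
  ⟨round (x - y), by rw [dist_eq_norm, ← AddCircle.coe_sub, UnitAddCircle.norm_eq]⟩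

variable {F : ℝ → ℝ} {d : ℤ}

lemma shift_int (hd : ∀ x, F (x + 1) = F x + d) (x : ℝ) (k : ℤ) :
    F (x + k) = F x + k * d := by
  induction k using Int.induction_on with
  | zero => simp
  | succ n ih =>
    have h : x + ((n + 1 : ℤ) : ℝ) = x + ((n : ℤ) : ℝ) + 1 := by push_cast; ring
    rw [h, hd, ih]
    push_cast
    ring
  | pred n ih =>
    have h := hd (x + ((-n - 1 : ℤ) : ℝ))
    have h' : x + ((-n - 1 : ℤ) : ℝ) + 1 = x + ((-n : ℤ) : ℝ) := by push_cast; ring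
    rw [h', ih] at h
    push_cast at h ⊢
    linarith

lemma shift_iterate (hd : ∀ x, F (x + 1) = F x + d) (n : ℕ) (x : ℝ) (k : ℤ) :
    F^[n] (x + k) = F^[n] x + k * (d : ℝ) ^ n := by
  induction n generalizing x k with
  | zero => simp
  | succ n ih =>
    rw [Function.iterate_succ_apply, Function.iterate_succ_apply, shift_int hd]
    have := ih (F x) (k * d)
    push_cast at this
    rw [this]
    ring

lemma cmap_coe (hd : ∀ x, F (x + 1) = F x + d) (x : ℝ) : cmap F x = (F x : ℝ) := by
  obtain ⟨k, hk⟩ := rep_coe x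
  rw [cmap, hk, shift_int hd]
  exact_mod_cast coe_add_int (F x) (k * d)

lemma cmap_iterate_coe (hd : ∀ x, F (x + 1) = F x + d) (n : ℕ) (x : ℝ) :
    (cmap F)^[n] x = (F^[n] x : ℝ) := by
  induction n generalizing x with
  | zero => rfl
  | succ n ih => rw [Function.iterate_succ_apply, Function.iterate_succ_apply, cmap_coe hd, ih]

/-- A metric on `ℝ`, invariant under integer translations and comparable to the usual one,
which `F` expands by the factor `θ⁻¹`. -/
structure Adapted (F : ℝ → ℝ) (ρ : ℝ → ℝ → ℝ) (M θ : ℝ) : Prop where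
  θ_nonneg : 0 ≤ θ
  θ_lt : θ < 1
  low : ∀ x y, |x - y| ≤ ρ x y
  up : ∀ x y, ρ x y ≤ M * |x - y|
  tri : ∀ x y z, ρ x z ≤ ρ x y + ρ y z
  inv : ∀ x y (k : ℤ), ρ (x + k) (y + k) = ρ x y
  exp : ∀ x y, ρ x y ≤ θ * ρ (F x) (F y)

variable {ρ : ℝ → ℝ → ℝ} {M θ : ℝ}

lemma Adapted.one_le (h : Adapted F ρ M θ) : 1 ≤ M := by
  have := (h.low 1 0).trans (h.up 1 0)
  simpa using this

lemma Adapted.exp_iterate (h : Adapted F ρ M θ) (n : ℕ) (x y : ℝ) :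
    ρ x y ≤ θ ^ n * ρ (F^[n] x) (F^[n] y) := by
  induction n generalizing x y with
  | zero => simp
  | succ n ih =>
    rw [Function.iterate_succ_apply, Function.iterate_succ_apply, pow_succ', mul_assoc]
    exact (h.exp x y).trans (mul_le_mul_of_nonneg_left (ih _ _) h.θ_nonneg)

lemma Adapted.abs_le (h : Adapted F ρ M θ) {n i : ℕ} (hi : i ≤ n) (x y : ℝ) :
    |F^[i] x - F^[i] y| ≤ θ ^ (n - i) * (M * |F^[n] x - F^[n] y|) := by
  have h1 := h.exp_iterate (n - i) (F^[i] x) (F^[i] y)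
  rw [← Function.iterate_add_apply, ← Function.iterate_add_apply, Nat.sub_add_cancel hi] at h1
  exact (h.low _ _).trans (h1.trans
    (mul_le_mul_of_nonneg_left (h.up _ _) (pow_nonneg h.θ_nonneg _)))

lemma Adapted.shadow (h : Adapted F ρ M θ) (hd : ∀ x, F (x + 1) = F x + d) (n : ℕ)
    (x y : ℝ) {D : ℝ} (hD : |F^[n] x - F^[n] y| ≤ D) :
    (∀ i ≤ n, dist ((cmap F)^[i] x) ((cmap F)^[i] y) ≤ M * (1 - θ)⁻¹ * D) ∧
      ∑ i ∈ Finset.range n, dist ((cmap F)^[i] x) ((cmap F)^[i] y) ≤ M * (1 - θ)⁻¹ * D := by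
  have hM := h.one_le
  have h0 := h.θ_nonneg
  have h1 : 0 < 1 - θ := sub_pos.2 h.θ_lt
  have hD0 : 0 ≤ D := (abs_nonneg _).trans hD
  have key : ∀ i ≤ n, dist ((cmap F)^[i] x) ((cmap F)^[i] y) ≤ θ ^ (n - i) * (M * D) := by
    intro i hi
    rw [cmap_iterate_coe hd, cmap_iterate_coe hd]
    refine (dist_coe_le _ _).trans ((h.abs_le hi x y).trans ?_)
    gcongr
  refine ⟨fun i hi => (key i hi).trans ?_, ?_⟩
  · have e1 : θ ^ (n - i) ≤ 1 := pow_le_one₀ h0 h.θ_lt.le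
    have e2 : 1 ≤ (1 - θ)⁻¹ := (one_le_inv₀ h1).2 (by linarith)
    have e3 : θ ^ (n - i) ≤ (1 - θ)⁻¹ := e1.trans e2
    calc θ ^ (n - i) * (M * D) ≤ (1 - θ)⁻¹ * (M * D) := by gcongr
      _ = _ := by ring
  · calc ∑ i ∈ Finset.range n, dist ((cmap F)^[i] x) ((cmap F)^[i] y)
        ≤ ∑ i ∈ Finset.range n, θ ^ (n - 1 - i) * (M * D) := by
          refine Finset.sum_le_sum fun i hi => (key i (Finset.mem_range.1 hi).le).trans ?_
          refine mul_le_mul_of_nonneg_right ?_ (by positivity)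
          exact pow_le_pow_of_le_one h0 h.θ_lt.le (by omega)
      _ = (∑ i ∈ Finset.range n, θ ^ i) * (M * D) := by
          rw [← Finset.sum_mul, Finset.sum_range_reflect (fun i => θ ^ i) n]
      _ ≤ (1 - θ)⁻¹ * (M * D) := by
          refine mul_le_mul_of_nonneg_right ?_ (by positivity)
          rw [← tsum_geometric_of_lt_one h0 h.θ_lt]
          exact (summable_geometric_of_lt_one h0 h.θ_lt).sum_le_tsum _
            fun i _ => pow_nonneg h0 i
      _ = _ := by ring

/-- If `|d| ≤ 1`, the points `0` and `1` would stay at distance at most `1` under iteration,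
contradicting expansion. -/
lemma Adapted.degree (h : Adapted F ρ M θ) (hd : ∀ x, F (x + 1) = F x + d) :
    1 < |(d : ℝ)| := by
  by_contra! hle
  have hM := h.one_le
  obtain ⟨n, hn⟩ := exists_pow_lt_of_lt_one (show (0 : ℝ) < M⁻¹ by positivity) h.θ_lt
  have h1 := h.abs_le (Nat.zero_le n) (0 + (1 : ℤ)) 0
  rw [shift_iterate hd n 0 1] at h1
  simp only [Function.iterate_zero, id, Nat.sub_zero, Int.cast_one, zero_add, sub_zero, abs_one,
    one_mul, add_sub_cancel_left, abs_pow] at h1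
  have h2 : |(d : ℝ)| ^ n ≤ 1 := pow_le_one₀ (abs_nonneg _) hle
  have h3 : θ ^ n * M < 1 := by
    calc θ ^ n * M < M⁻¹ * M := by gcongr
      _ = 1 := inv_mul_cancel₀ (by positivity)
  have h4 : M * |(d : ℝ)| ^ n ≤ M * 1 := by gcongr
  have h5 := mul_le_mul_of_nonneg_left h4 (pow_nonneg h.θ_nonneg n)
  linarith

/-- A continuous function on `ℝ` with `H k = H 0 + k c` for all integers `k`, `c ≠ 0`, is onto. -/
lemma surjective_of_shift {H : ℝ → ℝ} (hH : Continuous H) {c : ℝ} (hc : c ≠ 0)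
    (hs : ∀ k : ℤ, H k = H 0 + k * c) (u : ℝ) : ∃ w, H w = u := by
  have hr := (isPreconnected_range hH).ordConnected
  obtain ⟨n, hn⟩ := exists_nat_gt (|u - H 0| / |c|)
  rw [div_lt_iff₀ (abs_pos.2 hc)] at hn
  have h1 := hs n
  have h2 := hs (-n)
  push_cast at h1 h2
  have hu := abs_le.1 hn.le
  rcases lt_or_gt_of_ne hc with hc' | hc'
  · rw [abs_of_neg hc'] at hu
    exact hr.out ⟨_, h1⟩ ⟨_, h2⟩ ⟨by linarith, by linarith⟩
  · rw [abs_of_pos hc'] at hu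
    exact hr.out ⟨_, h2⟩ ⟨_, h1⟩ ⟨by linarith, by linarith⟩

/-- Preimages and periodic points are found on the line with the intermediate value theorem;
all estimates then come from contraction of the inverse branches in the adapted metric. -/
theorem Adapted.sys (h : Adapted F ρ M θ) (hF : Continuous F) (hd : ∀ x, F (x + 1) = F x + d)
    {Λ : ℝ} (hΛ0 : 0 ≤ Λ) (hΛ : ∀ x y, |F x - F y| ≤ Λ * |x - y|) {A : ℝ}
    (hA : Λ + M * (1 - θ)⁻¹ * (M * (1 - θ)⁻¹ + 1) ≤ A) :
    Sys A (1 / (Λ + 2)) (cmap F) := by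
  have hM := h.one_le
  have h0 := h.θ_nonneg
  have h1 : 0 < 1 - θ := sub_pos.2 h.θ_lt
  have hS : 1 ≤ (1 - θ)⁻¹ := (one_le_inv₀ h1).2 (by linarith)
  set B := M * (1 - θ)⁻¹ with hB
  have hB1 : 1 ≤ B := one_le_mul_of_one_le_of_one_le hM hS
  have hBB : B * (B + 1) ≤ A := by linarith
  have hBA : B ≤ A := by nlinarith
  have hdeg := h.degree hd
  have hpow : ∀ n, 1 ≤ n → 1 < |(d : ℝ) ^ n| := fun n hn => by
    rw [abs_pow]
    exact one_lt_pow₀ hdeg (by omega)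
  have hd0 : ∀ n, (d : ℝ) ^ n ≠ 0 := fun n => pow_ne_zero _ (by
    intro hd0
    rw [hd0, abs_zero] at hdeg
    linarith)
  refine ⟨by linarith, by positivity, ?_, ?_, ?_, ?_⟩
  · intro x y
    obtain ⟨x, rfl⟩ := QuotientAddGroup.mk_surjective x
    obtain ⟨y, rfl⟩ := QuotientAddGroup.mk_surjective y
    obtain ⟨k, hk⟩ := exists_int_dist x y
    change dist (cmap F (x : Circle1)) (cmap F (y : Circle1)) ≤ A * dist (x : Circle1) y
    rw [← coe_add_int y k, cmap_coe hd, cmap_coe hd, coe_add_int y k, hk]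
    calc dist ((F x : ℝ) : Circle1) ((F (y + k) : ℝ) : Circle1) ≤ |F x - F (y + k)| :=
          dist_coe_le _ _
      _ ≤ Λ * |x - (y + k)| := hΛ _ _
      _ ≤ A * |x - y - k| := by
          rw [sub_add_eq_sub_sub]
          exact mul_le_mul_of_nonneg_right (by nlinarith) (abs_nonneg _)
  · intro x n u
    obtain ⟨x, rfl⟩ := QuotientAddGroup.mk_surjective x
    obtain ⟨u, rfl⟩ := QuotientAddGroup.mk_surjective u
    change ∃ w, (cmap F)^[n] w = (u : Circle1) ∧
      (∀ i ≤ n, dist ((cmap F)^[i] w) ((cmap F)^[i] (x : Circle1)) ≤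
        A * dist (u : Circle1) ((cmap F)^[n] (x : Circle1))) ∧
      ∑ i ∈ Finset.range n, dist ((cmap F)^[i] w) ((cmap F)^[i] (x : Circle1)) ≤
        A * dist (u : Circle1) ((cmap F)^[n] (x : Circle1))
    obtain ⟨k, hk⟩ := exists_int_dist u (F^[n] x)
    obtain ⟨w, hw⟩ := surjective_of_shift (hF.iterate n) (hd0 n)
      (fun k => by simpa using shift_iterate hd n 0 k) (u - k)
    have hs := h.shadow hd n w x (D := dist (u : Circle1) ((cmap F)^[n] (x : Circle1))) (by
      rw [cmap_iterate_coe hd, hk, hw]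
      apply le_of_eq
      congr 1
      ring)
    have hle := mul_le_mul_of_nonneg_right hBA
      (dist_nonneg (x := (u : Circle1)) (y := (cmap F)^[n] (x : Circle1)))
    refine ⟨w, ?_, fun i hi => (hs.1 i hi).trans hle, hs.2.trans hle⟩
    rw [cmap_iterate_coe hd, hw]
    have := coe_add_int u (-k)
    push_cast at this
    rwa [← sub_eq_add_neg] at this
  · intro x n hn
    obtain ⟨x, rfl⟩ := QuotientAddGroup.mk_surjective x
    obtain ⟨k, hk⟩ := exists_int_dist (F^[n] x) x
    -- The fixed point of `Fⁿ` on the circle is found as a solution of `Fⁿ w = w + k`.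
    obtain ⟨w, hw⟩ := surjective_of_shift (H := fun u => F^[n] u - u)
      ((hF.iterate n).sub continuous_id) (c := (d : ℝ) ^ n - 1)
      (by
        intro hc
        have := hpow n hn
        rw [sub_eq_zero.1 hc, abs_one] at this
        exact lt_irrefl _ this)
      (fun k => by
        have := shift_iterate hd n 0 k
        rw [zero_add] at this
        simp only [this]
        ring) k
    have hw' : F^[n] w = w + k := by linarith
    set e : ℝ := |F^[n] x - x - k| with he
    have hxw : ρ x w ≤ B * e := by
      have e1 := h.exp_iterate n x w
      have e2 : ρ (F^[n] x) (F^[n] w) = ρ (F^[n] x - k) w := by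
        have := h.inv (F^[n] x - k) w k
        rw [sub_add_cancel] at this
        rw [hw', this]
      have e3 := h.tri (F^[n] x - k) x w
      have e4 := h.up (F^[n] x - k) x
      have e5 : |F^[n] x - k - x| = e := by
        rw [he]
        congr 1
        ring
      have e6 : θ ^ n ≤ θ := pow_le_of_le_one h0 h.θ_lt.le (by omega)
      have e7 : 0 ≤ ρ x w := (abs_nonneg _).trans (h.low x w)
      rw [e5] at e4
      rw [e2] at e1
      have e8 : ρ x w ≤ θ * (M * e + ρ x w) := by
        refine e1.trans (mul_le_mul e6 (by linarith)
          ((abs_nonneg _).trans (h.low _ _)) h0)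
      have e9 : ρ x w * (1 - θ) ≤ M * e := by
        have : θ * (M * e) ≤ 1 * (M * e) :=
          mul_le_mul_of_nonneg_right h.θ_lt.le (by positivity)
        linarith
      rw [← le_div_iff₀ h1] at e9
      rw [hB]
      calc ρ x w ≤ M * e / (1 - θ) := e9
        _ = _ := by ring
    have hs := h.shadow hd n w x (D := (B + 1) * e) (by
      have e1 : F^[n] w - F^[n] x = -(x - w) - (F^[n] x - x - k) := by
        rw [hw']
        ring
      rw [e1]
      refine (abs_sub _ _).trans ?_
      rw [abs_neg]
      linarith [h.low x w])
    have hle : B * ((B + 1) * e) ≤ A * e := by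
      rw [← mul_assoc]
      exact mul_le_mul_of_nonneg_right hBB (abs_nonneg _)
    rw [cmap_iterate_coe hd n x, hk]
    refine ⟨w, ?_, fun i hi => (hs.1 i hi).trans hle, hs.2.trans hle⟩
    rw [cmap_iterate_coe hd, hw', coe_add_int]
  · intro x y hxy
    obtain ⟨x, rfl⟩ := QuotientAddGroup.mk_surjective x
    obtain ⟨y, rfl⟩ := QuotientAddGroup.mk_surjective y
    change (x : Circle1) = (y : Circle1)
    replace hxy : ∀ i, dist ((cmap F)^[i] (x : Circle1)) ((cmap F)^[i] (y : Circle1)) ≤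
      1 / (Λ + 2) := hxy
    have hr : (Λ + 2) * (1 / (Λ + 2)) = 1 := by field_simp
    set r₀ : ℝ := 1 / (Λ + 2) with hr₀
    have hr0 : 0 < r₀ := by positivity
    obtain ⟨k, hk⟩ := exists_int_dist x y
    have hxy0 := hxy 0
    simp only [Function.iterate_zero, id] at hxy0
    rw [hk] at hxy0
    rw [← coe_add_int y k] at hxy ⊢
    rw [← sub_add_eq_sub_sub] at hxy0
    generalize y + (k : ℝ) = y' at *
    -- The lifted orbits stay `r₀`-close: the distance of the next pair of points is an
    -- integer up to `r₀` and is smaller than `1 - r₀`.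
    have hcl : ∀ i, |F^[i] x - F^[i] y'| ≤ r₀ := by
      intro i
      induction i with
      | zero => exact hxy0
      | succ i ih =>
        have e1 := hxy (i + 1)
        rw [cmap_iterate_coe hd, cmap_iterate_coe hd] at e1
        obtain ⟨m, hm⟩ := exists_int_dist (F^[i + 1] x) (F^[i + 1] y')
        rw [hm] at e1
        have e2 := hΛ (F^[i] x) (F^[i] y')
        rw [← Function.iterate_succ_apply' F, ← Function.iterate_succ_apply' F] at e2
        have e3 : Λ * |F^[i] x - F^[i] y'| ≤ Λ * r₀ := mul_le_mul_of_nonneg_left ih hΛ0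
        have e4 : |(m : ℝ)| < 1 := by
          have e5 : (m : ℝ) = (F^[i + 1] x - F^[i + 1] y') -
            (F^[i + 1] x - F^[i + 1] y' - m) := by ring
          rw [e5]
          refine (abs_sub _ _).trans_lt ?_
          linarith
        have e6 : m = 0 := by
          rw [← Int.cast_abs] at e4
          exact Int.abs_lt_one_iff.1 (by exact_mod_cast e4)
        rw [e6] at e1
        simpa using e1
    have hlim : Tendsto (fun n : ℕ => θ ^ n * (M * r₀)) atTop (𝓝 0) := by
      simpa using (tendsto_pow_atTop_nhds_zero_of_lt_one h0 h.θ_lt).mul_const (M * r₀)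
    have hle : |x - y'| ≤ 0 := by
      refine ge_of_tendsto hlim (Eventually.of_forall fun n => ?_)
      have := h.abs_le (Nat.zero_le n) x y'
      simp only [Function.iterate_zero, id, Nat.sub_zero] at this
      refine this.trans ?_
      have := hcl n
      gcongr
    have := abs_eq_zero.1 (le_antisymm hle (abs_nonneg _))
    rw [sub_eq_zero.1 this]

end MaxErg

namespace MaxErg

/-! ### Uniform expansion near an expanding map -/

lemma periodic_uniformContinuous {g : ℝ → ℝ} (hg : Continuous g) (hp : Function.Periodic g 1) :
    UniformContinuous g := by
  have h1 : Continuous (hp.lift : Circle1 → ℝ) := continuous_coinduced_dom.2 hg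
  have h2 : UniformContinuous (fun x : ℝ => (x : Circle1)) :=
    (LipschitzWith.of_dist_le_mul (K := 1) fun x y => by
      simpa [Real.dist_eq] using dist_coe_le x y).uniformContinuous
  exact (CompactSpace.uniformContinuous_of_continuous h1).comp h2

lemma periodic_bounded {g : ℝ → ℝ} (hg : Continuous g) (hp : Function.Periodic g 1) :
    ∃ B, 0 ≤ B ∧ ∀ x, |g x| ≤ B := by
  obtain ⟨B, hB⟩ := (hp.isBounded_of_continuous one_ne_zero hg).exists_norm_le
  exact ⟨B, (norm_nonneg _).trans (hB (g 0) ⟨0, rfl⟩), fun x => hB (g x) ⟨x, rfl⟩⟩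

lemma deriv_periodic {F : ℝ → ℝ} {c : ℝ} (hF : ∀ x, F (x + 1) = F x + c) :
    Function.Periodic (deriv F) 1 := by
  intro x
  rw [← deriv_comp_add_const]
  simp only [hF]
  rw [deriv_add_const]

lemma contDiff_iterate {F : ℝ → ℝ} (hF : ContDiff ℝ 1 F) (n : ℕ) : ContDiff ℝ 1 F^[n] := by
  induction n with
  | zero => exact contDiff_id
  | succ n ih => exact ih.comp hF

lemma lip_of_deriv {g : ℝ → ℝ} (hg : Differentiable ℝ g) {B : ℝ} (hB : ∀ x, |deriv g x| ≤ B)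
    (x y : ℝ) : |g x - g y| ≤ B * |x - y| :=
  convex_univ.norm_image_sub_le_of_norm_deriv_le (fun x _ => hg x) (fun x _ => hB x)
    (mem_univ y) (mem_univ x)

lemma expand_of_deriv {g : ℝ → ℝ} (hg : Differentiable ℝ g) {B : ℝ}
    (hB : ∀ x, B ≤ |deriv g x|) (x y : ℝ) : B * |x - y| ≤ |g x - g y| := by
  wlog hxy : y < x generalizing x y
  · rcases eq_or_lt_of_le (not_lt.1 hxy) with rfl | h
    · simp
    · rw [abs_sub_comm, abs_sub_comm (g x)]
      exact this y x h
  obtain ⟨c, -, hc⟩ := exists_deriv_eq_slope g hxy hg.continuous.continuousOn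
    (fun z _ => (hg z).differentiableWithinAt)
  have h0 : 0 < x - y := sub_pos.2 hxy
  have h1 : g x - g y = deriv g c * (x - y) := by
    rw [hc]
    field_simp
  rw [h1, abs_mul]
  exact mul_le_mul_of_nonneg_right (hB c) (abs_nonneg _)

/-- The difference `P ∘ F₀ - P ∘ F` has a small Lipschitz constant when `F` is `C¹`-close to
`F₀`. -/
lemma comp_close {F₀ P : ℝ → ℝ} {c : ℝ} (hF₀ : ContDiff ℝ 1 F₀)
    (hP : ContDiff ℝ 1 P) (hPc : ∀ x, P (x + 1) = P x + c) {Λ₀ : ℝ}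
    (hΛ : ∀ x, |deriv F₀ x| ≤ Λ₀) {τ : ℝ} (hτ : 0 < τ) :
    ∃ η > 0, ∀ F : ℝ → ℝ, ContDiff ℝ 1 F → (∀ x, |F x - F₀ x| ≤ η) →
      (∀ x, |deriv F x - deriv F₀ x| ≤ η) →
      ∀ x y, |(P (F₀ x) - P (F x)) - (P (F₀ y) - P (F y))| ≤ τ * |x - y| := by
  have hcont : Continuous (deriv P) := hP.continuous_deriv le_rfl
  obtain ⟨B, hB0, hB⟩ := periodic_bounded hcont (deriv_periodic hPc)
  obtain ⟨ω, hω, hωτ⟩ := exists_pos_mul_lt (half_pos hτ) (Λ₀ + 1)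
  obtain ⟨δ, hδ, hδω⟩ := Metric.uniformContinuous_iff.1
    (periodic_uniformContinuous hcont (deriv_periodic hPc)) ω hω
  obtain ⟨s, hs, hsτ⟩ := exists_pos_mul_lt (half_pos hτ) B
  refine ⟨min s (min (δ / 2) 1), by positivity, fun F hF h0 h1 => ?_⟩
  have hdF₀ := hF₀.differentiable one_ne_zero
  have hdF := hF.differentiable one_ne_zero
  have hdP := hP.differentiable one_ne_zero
  have hder : ∀ x, HasDerivAt (fun x => P (F₀ x) - P (F x))
      (deriv P (F₀ x) * deriv F₀ x - deriv P (F x) * deriv F x) x := fun x =>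
    ((hdP _).hasDerivAt.comp x (hdF₀ x).hasDerivAt).sub
      ((hdP _).hasDerivAt.comp x (hdF x).hasDerivAt)
  refine lip_of_deriv (fun x => (hder x).differentiableAt) fun x => ?_
  rw [(hder x).deriv]
  have e0 := h0 x
  have e1 := h1 x
  have e2 : |deriv F x - deriv F₀ x| ≤ s := e1.trans (min_le_left _ _)
  have e3 : |deriv F x - deriv F₀ x| ≤ 1 := e1.trans ((min_le_right _ _).trans (min_le_right _ _))
  have e4 : |F x - F₀ x| < δ := by
    have := e0.trans ((min_le_right _ _).trans (min_le_left _ _))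
    linarith
  have e5 : |deriv P (F x) - deriv P (F₀ x)| ≤ ω := by
    have := hδω (a := F x) (b := F₀ x) (by rwa [Real.dist_eq])
    rw [Real.dist_eq] at this
    exact this.le
  have e6 : |deriv F x| ≤ Λ₀ + 1 := by
    have := abs_sub_abs_le_abs_sub (deriv F x) (deriv F₀ x)
    linarith [hΛ x]
  have e7 : deriv P (F₀ x) * deriv F₀ x - deriv P (F x) * deriv F x =
      -(deriv P (F₀ x) * (deriv F x - deriv F₀ x)) -
        (deriv P (F x) - deriv P (F₀ x)) * deriv F x := by ring
  rw [e7]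
  refine (abs_sub _ _).trans ?_
  rw [abs_neg, abs_mul, abs_mul]
  have e8 : |deriv P (F₀ x)| * |deriv F x - deriv F₀ x| ≤ B * s :=
    mul_le_mul (hB _) e2 (abs_nonneg _) hB0
  have e9 : |deriv P (F x) - deriv P (F₀ x)| * |deriv F x| ≤ ω * (Λ₀ + 1) :=
    mul_le_mul e5 e6 (abs_nonneg _) hω.le
  linarith

/-- The circle maps with lifts `C¹`-close to an expanding lift satisfy `Sys` with common
constants. The metric `ρ(x, y) = ∑_{i < N} |F₀ⁱ x - F₀ⁱ y|`, with `|(F₀ᴺ)'| ≥ 2`, is adapted to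
all of them, since `ρ(F₀ x, F₀ y) - ρ(x, y) = |F₀ᴺ x - F₀ᴺ y| - |x - y|`. -/
theorem uniform_sys {F₀ : ℝ → ℝ} (hF₀ : ContDiff ℝ 1 F₀) {d₀ : ℤ}
    (hd₀ : ∀ x, F₀ (x + 1) = F₀ x + d₀) {C l : ℝ} (hC : 0 < C) (hl : 1 < l)
    (hexp : ∀ n : ℕ, 1 ≤ n → ∀ x : ℝ, C * l ^ n ≤ |deriv (F₀^[n]) x|) :
    ∃ A r₀ η : ℝ, 0 < η ∧ ∀ (F : ℝ → ℝ) (d : ℤ), ContDiff ℝ 1 F →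
      (∀ x, F (x + 1) = F x + d) → (∀ x, |F x - F₀ x| ≤ η) →
      (∀ x, |deriv F x - deriv F₀ x| ≤ η) → ∀ A' ≥ A, Sys A' r₀ (cmap F) := by
  obtain ⟨N', hN'⟩ := pow_unbounded_of_one_lt (2 / C) hl
  set N := N' + 1 with hN
  have hN2 : ∀ x, 2 ≤ |deriv (F₀^[N]) x| := fun x => by
    refine le_trans ?_ (hexp N (by omega) x)
    have e1 : l ^ N' ≤ l ^ N := pow_le_pow_right₀ hl.le (by omega)
    rw [div_lt_iff₀' hC] at hN'
    nlinarith
  have hexpN := expand_of_deriv ((contDiff_iterate hF₀ N).differentiable one_ne_zero) hN2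
  have hsh : ∀ n x, F₀^[n] (x + 1) = F₀^[n] x + (d₀ : ℝ) ^ n := fun n x => by
    simpa using shift_iterate hd₀ n x 1
  have hLip : ∀ n, ∃ B, 0 ≤ B ∧ ∀ x, |deriv (F₀^[n]) x| ≤ B := fun n =>
    periodic_bounded ((contDiff_iterate hF₀ n).continuous_deriv le_rfl)
      (deriv_periodic (hsh n))
  choose B hB0 hB using hLip
  have hBlip : ∀ n x y, |F₀^[n] x - F₀^[n] y| ≤ B n * |x - y| := fun n x y =>
    lip_of_deriv ((contDiff_iterate hF₀ n).differentiable one_ne_zero) (hB n) x y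
  obtain ⟨Λ₀, hΛ0, hΛ⟩ : ∃ B, 0 ≤ B ∧ ∀ x, |deriv F₀ x| ≤ B := ⟨B 1, hB0 1, hB 1⟩
  set M : ℝ := 1 + ∑ i ∈ Finset.range N, B i with hM
  have hM0 : 0 ≤ ∑ i ∈ Finset.range N, B i := Finset.sum_nonneg fun i _ => hB0 i
  have hM1 : 1 ≤ M := by linarith
  set τ : ℝ := 1 / (2 * N) with hτ
  have hNpos : (0 : ℝ) < N := by positivity
  have hτ0 : 0 < τ := by positivity
  have hclose : ∀ n : ℕ, ∃ η > 0, ∀ F : ℝ → ℝ, ContDiff ℝ 1 F → (∀ x, |F x - F₀ x| ≤ η) →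
      (∀ x, |deriv F x - deriv F₀ x| ≤ η) → ∀ i < n, ∀ x y,
        |(F₀^[i] (F₀ x) - F₀^[i] (F x)) - (F₀^[i] (F₀ y) - F₀^[i] (F y))| ≤ τ * |x - y| := by
    intro n
    induction n with
    | zero => exact ⟨1, one_pos, fun F _ _ _ i hi => absurd hi (Nat.not_lt_zero i)⟩
    | succ n ih =>
      obtain ⟨η₁, h1, H1⟩ := ih
      obtain ⟨η₂, h2, H2⟩ := comp_close hF₀ (contDiff_iterate hF₀ n) (hsh n) hΛ hτ0
      refine ⟨min η₁ η₂, lt_min h1 h2, fun F hF hc hc' i hi => ?_⟩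
      rcases Nat.lt_succ_iff_lt_or_eq.1 hi with hi | rfl
      · exact H1 F hF (fun x => (hc x).trans (min_le_left _ _))
          (fun x => (hc' x).trans (min_le_left _ _)) i hi
      · exact H2 F hF (fun x => (hc x).trans (min_le_right _ _))
          (fun x => (hc' x).trans (min_le_right _ _))
  obtain ⟨η, hη, H⟩ := hclose N
  set ρ : ℝ → ℝ → ℝ := fun x y => ∑ i ∈ Finset.range N, |F₀^[i] x - F₀^[i] y| with hρ
  have hup : ∀ x y, ρ x y ≤ M * |x - y| := fun x y => by
    calc ρ x y ≤ ∑ i ∈ Finset.range N, B i * |x - y| :=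
          Finset.sum_le_sum fun i _ => hBlip i x y
      _ = (∑ i ∈ Finset.range N, B i) * |x - y| := by rw [Finset.sum_mul]
      _ ≤ M * |x - y| := mul_le_mul_of_nonneg_right (by linarith) (abs_nonneg _)
  set θ : ℝ := 2 * M / (2 * M + 1) with hθ
  refine ⟨Λ₀ + 1 + M * (1 - θ)⁻¹ * (M * (1 - θ)⁻¹ + 1), 1 / (Λ₀ + 1 + 2), min η 1, lt_min hη one_pos,
    fun F d hF hd hc hc' A' hA' => ?_⟩
  refine Adapted.sys (ρ := ρ) (M := M) (θ := θ) (Λ := Λ₀ + 1)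
    ⟨by positivity, ?_, ?_, hup, ?_, ?_, ?_⟩ hF.continuous hd (by linarith) ?_ hA'
  · rw [div_lt_one (by linarith)]
    linarith
  · intro x y
    have := Finset.single_le_sum (f := fun i => |F₀^[i] x - F₀^[i] y|)
      (fun i _ => abs_nonneg _) (Finset.mem_range.2 (Nat.succ_pos N'))
    simpa using this
  · intro x y z
    rw [hρ]
    simp only
    rw [← Finset.sum_add_distrib]
    exact Finset.sum_le_sum fun i _ => abs_sub_le _ _ _
  · intro x y k
    refine Finset.sum_congr rfl fun i _ => ?_
    rw [shift_iterate hd₀, shift_iterate hd₀, add_sub_add_right_eq_sub]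
  · intro x y
    have e1 : ρ (F₀ x) (F₀ y) = ρ x y - |x - y| + |F₀^[N] x - F₀^[N] y| := by
      have e2 := Finset.sum_range_succ (fun i => |F₀^[i] x - F₀^[i] y|) N
      rw [Finset.sum_range_succ'] at e2
      simp only [Function.iterate_succ_apply, Function.iterate_zero, id] at e2
      simp only [hρ]
      linarith
    have e3 : ρ (F₀ x) (F₀ y) - N * (τ * |x - y|) ≤ ρ (F x) (F y) := by
      have : (N : ℝ) * (τ * |x - y|) = ∑ _i ∈ Finset.range N, τ * |x - y| := by
        rw [Finset.sum_const, Finset.card_range, nsmul_eq_mul]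
      rw [this]
      simp only [hρ]
      rw [← Finset.sum_sub_distrib]
      refine Finset.sum_le_sum fun i hi => ?_
      have e4 := H F hF (fun x => (hc x).trans (min_le_left _ _))
        (fun x => (hc' x).trans (min_le_left _ _)) i (Finset.mem_range.1 hi) x y
      have e5 := abs_sub_abs_le_abs_sub (F₀^[i] (F₀ x) - F₀^[i] (F₀ y))
        (F₀^[i] (F x) - F₀^[i] (F y))
      rw [sub_sub_sub_comm] at e5
      linarith
    have e6 : (N : ℝ) * (τ * |x - y|) = |x - y| / 2 := by
      rw [hτ]
      field_simp
    have e7 := hexpN x y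
    have e8 := hup x y
    rw [div_mul_eq_mul_div, le_div_iff₀ (by linarith)]
    have e9 : ρ x y + |x - y| / 2 ≤ ρ (F x) (F y) := by linarith
    nlinarith
  · refine lip_of_deriv (hF.differentiable one_ne_zero) fun x => ?_
    have e1 := (hc' x).trans (min_le_right _ _)
    have := abs_sub_abs_le_abs_sub (deriv F x) (deriv F₀ x)
    linarith [hΛ x]

end MaxErg

namespace MaxErg

/-! ### The `C^r` topologies -/

lemma expMap_nhds {r : ℕ∞} (hr : 1 ≤ r) (F₀ : ExpMap r) {η : ℝ} (hη : 0 < η) :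
    ∀ᶠ F in 𝓝 F₀, (∀ x, |F.1 x - F₀.1 x| ≤ η) ∧ ∀ x, |deriv F.1 x - deriv F₀.1 x| ≤ η := by
  have hk : ∀ k : ℕ, (k : ℕ∞) ≤ r → ∀ᶠ F in 𝓝 F₀, ∀ x,
      |iteratedDeriv k F.1 x - iteratedDeriv k F₀.1 x| ≤ η := by
    intro k hk
    have h1 : Continuous fun F : ExpMap r => crSeq r F.1 k :=
      (continuous_apply k).comp
        (continuous_induced_dom (f := fun F : ExpMap r => crSeq r F.1))
    have h2 := UniformFun.tendsto_iff_tendstoUniformly.1 (h1.tendsto F₀)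
    filter_upwards [Metric.tendstoUniformly_iff.1 h2 η hη] with F hF x
    have h3 := hF x
    simp only [crSeq, if_pos hk, Function.comp_apply, UniformFun.toFun_ofFun] at h3
    rw [dist_comm, Real.dist_eq] at h3
    exact h3.le
  filter_upwards [hk 0 (by simp), hk 1 (by simpa using hr)] with F h0 h1
  exact ⟨fun x => by simpa using h0 x, fun x => by simpa using h1 x⟩

lemma famFun_nhds {r : ℕ∞} (hr : 1 ≤ r) {q : ℕ} (G₀ : FamFun r q) {η : ℝ} (hη : 0 < η) :
    ∀ᶠ G in 𝓝 G₀, (∀ z, |G.1 z - G₀.1 z| ≤ η) ∧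
      ∀ z, ‖fderiv ℝ G.1 z‖ ≤ ‖fderiv ℝ G₀.1 z‖ + η := by
  have hk : ∀ k : ℕ, (k : ℕ∞) ≤ r → ∀ᶠ G in 𝓝 G₀, ∀ z,
      ‖iteratedFDeriv ℝ k G.1 z - iteratedFDeriv ℝ k G₀.1 z‖ ≤ η := by
    intro k hk
    have h1 : Continuous fun G : FamFun r q => famSeq r q G.1 k :=
      (continuous_apply k).comp
        (continuous_induced_dom (f := fun G : FamFun r q => famSeq r q G.1))
    have h2 := UniformFun.tendsto_iff_tendstoUniformly.1 (h1.tendsto G₀)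
    filter_upwards [Metric.tendstoUniformly_iff.1 h2 η hη] with G hG z
    have h3 := hG z
    simp only [famSeq, if_pos hk, Function.comp_apply, UniformFun.toFun_ofFun] at h3
    rw [dist_comm, dist_eq_norm] at h3
    exact h3.le
  filter_upwards [hk 0 (by simp), hk 1 (by simpa using hr)] with G h0 h1
  refine ⟨fun z => ?_, fun z => ?_⟩
  · have h2 := (iteratedFDeriv ℝ 0 G.1 z - iteratedFDeriv ℝ 0 G₀.1 z).le_opNorm 0
    simp only [sub_apply, iteratedFDeriv_zero_apply,
      Finset.univ_eq_empty, Finset.prod_empty, mul_one, Real.norm_eq_abs] at h2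
    exact h2.trans (h0 z)
  · have h2 := norm_sub_norm_le (iteratedFDeriv ℝ 1 G.1 z) (iteratedFDeriv ℝ 1 G₀.1 z)
    rw [norm_iteratedFDeriv_one, norm_iteratedFDeriv_one] at h2
    linarith [h1 z]

lemma rep_mem (z : Circle1) : rep z ∈ Ico (0 : ℝ) 1 := by
  have h := (AddCircle.equivIco 1 0 z).2
  exact ⟨h.1, h.2.trans_eq (zero_add 1)⟩

/-- Members of nearby families at nearby parameters are uniformly close, with a common
Lipschitz constant. -/
lemma famMem_nhds {r : ℕ∞} (hr : 1 ≤ r) {q : ℕ} (G₀ : FamFun r q) (t₀ : Fin q → ℝ) :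
    ∃ K : ℝ, ∀ η > 0, ∀ᶠ z in 𝓝 (G₀, t₀), LipF K (famMem z.1 z.2) ∧
      ∀ x, |famMem z.1 z.2 x - famMem G₀ t₀ x| ≤ η := by
  have hr' : (1 : WithTop ℕ∞) ≤ (r : WithTop ℕ∞) := by exact_mod_cast hr
  have hdiff : ∀ G : FamFun r q, Differentiable ℝ G.1 := fun G =>
    (G.2.1.of_le hr').differentiable one_ne_zero
  set s : Set ((Fin q → ℝ) × ℝ) := Metric.closedBall t₀ 1 ×ˢ Icc (-1) 2 with hs
  have hconv : Convex ℝ s := (convex_closedBall t₀ 1).prod (convex_Icc _ _)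
  obtain ⟨K₀, hK₀⟩ := ((isCompact_closedBall t₀ 1).prod
    (isCompact_Icc (a := (-1 : ℝ)) (b := 2))).exists_bound_of_continuousOn
    ((G₀.2.1.of_le hr').continuous_fderiv one_ne_zero).continuousOn
  have hK0 : 0 ≤ K₀ := (norm_nonneg _).trans
    (hK₀ (t₀, 0) ⟨Metric.mem_closedBall_self zero_le_one, by norm_num, by norm_num⟩)
  refine ⟨K₀ + 1, fun η hη => ?_⟩
  obtain ⟨δ, hδ, hδη⟩ := exists_pos_mul_lt (half_pos hη) K₀
  have e1 := (continuous_fst.tendsto (G₀, t₀)).eventually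
    (famFun_nhds hr G₀ (lt_min one_pos (half_pos hη)))
  have e2 := (continuous_snd.tendsto (G₀, t₀)).eventually
    (Metric.closedBall_mem_nhds t₀ (lt_min one_pos hδ))
  filter_upwards [e1, e2]
  rintro ⟨G, t⟩ ⟨h1, h2⟩ ht
  simp only at h1 h2 ht ⊢
  have ht1 : t ∈ Metric.closedBall t₀ 1 :=
    Metric.closedBall_subset_closedBall (min_le_left _ _) ht
  have ht2 : dist t t₀ ≤ δ := (Metric.mem_closedBall.1 ht).trans (min_le_right _ _)
  refine ⟨fun x y => ?_, fun x => ?_⟩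
  · obtain ⟨k, hk⟩ := exists_int_dist (rep x) (rep y)
    rw [coe_rep, coe_rep] at hk
    have hx := rep_mem x
    have hper : G.1 (t, rep y + k) = G.1 (t, rep y) := by
      have := shift_int (F := fun u => G.1 (t, u)) (d := 0)
        (fun u => by simpa using G.2.2 t u) (rep y) k
      simpa using this
    have hd := dist_le_one x y
    rw [hk, abs_le] at hd
    have := hconv.norm_image_sub_le_of_norm_fderiv_le (𝕜 := ℝ) (f := G.1) (C := K₀ + 1)
      (fun z _ => hdiff G z)
      (fun z hz => (h2 z).trans (add_le_add (hK₀ z hz) (min_le_left _ _)))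
      (x := (t, rep y + k)) (y := (t, rep x))
      ⟨ht1, by simp only; linarith [hx.1], by simp only; linarith [hx.2]⟩
      ⟨ht1, by simp only; linarith [hx.1], by simp only; linarith [hx.2]⟩
    rw [hper, Prod.mk_sub_mk, sub_self, Prod.norm_mk, norm_zero,
      max_eq_right (norm_nonneg _), Real.norm_eq_abs, Real.norm_eq_abs] at this
    rw [hk, sub_sub]
    exact this
  · have hx := rep_mem x
    have e3 := h1 (t, rep x)
    have e4 := hconv.norm_image_sub_le_of_norm_fderiv_le (𝕜 := ℝ) (f := G₀.1)
      (fun z _ => hdiff G₀ z) hK₀ (x := (t₀, rep x)) (y := (t, rep x))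
      ⟨Metric.mem_closedBall_self zero_le_one, by simp only; linarith [hx.1],
        by simp only; linarith [hx.2]⟩
      ⟨ht1, by simp only; linarith [hx.1], by simp only; linarith [hx.2]⟩
    rw [Prod.mk_sub_mk, sub_self, Prod.norm_mk, norm_zero,
      max_eq_left (norm_nonneg _), Real.norm_eq_abs, ← dist_eq_norm] at e4
    have e5 : K₀ * dist t t₀ ≤ K₀ * δ := mul_le_mul_of_nonneg_left ht2 hK0
    have e6 := min_le_right 1 (η / 2)
    have e7 := abs_sub_le (G.1 (t, rep x)) (G₀.1 (t, rep x)) (G₀.1 (t₀, rep x))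
    simp only [famMem]
    linarith

lemma LipF.mono {A B : ℝ} {f : Circle1 → ℝ} (h : LipF A f) (hAB : A ≤ B) : LipF B f :=
  fun x y => (h x y).trans (mul_le_mul_of_nonneg_right hAB dist_nonneg)

/-- Openness, jointly in the family, the map and the parameter, of the condition that the
non-wandering set is a periodic orbit. -/
theorem eventually_periodic {r : ℕ∞} (hr : 1 ≤ r) {q : ℕ} (G₀ : FamFun r q) (F₀ : ExpMap r)
    (t₀ : Fin q → ℝ)
    (h : IsPeriodicOrbit (cmap F₀.1) (OmegaSet (famMem G₀ t₀) (cmap F₀.1))) :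
    ∀ᶠ z : (FamFun r q × ExpMap r) × (Fin q → ℝ) in 𝓝 ((G₀, F₀), t₀),
      IsPeriodicOrbit (cmap z.1.2.1) (OmegaSet (famMem z.1.1 z.2) (cmap z.1.2.1)) := by
  have hr' : (1 : WithTop ℕ∞) ≤ (r : WithTop ℕ∞) := by exact_mod_cast hr
  obtain ⟨hF₀, ⟨d₀, hd₀⟩, C, hC, l, hl, hexp⟩ := F₀.2
  obtain ⟨A₁, r₀, η₁, hη₁, hsys⟩ := uniform_sys (hF₀.of_le hr') hd₀ hC hl hexp
  obtain ⟨K, hK⟩ := famMem_nhds hr G₀ t₀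
  set A := max A₁ K with hA
  have hS₀ : Sys A r₀ (cmap F₀.1) := hsys F₀.1 d₀ (hF₀.of_le hr') hd₀
    (fun x => by simpa using hη₁.le) (fun x => by simpa using hη₁.le) A (le_max_left _ _)
  have hL₀ : LipF A (famMem G₀ t₀) := ((hK 1 one_pos).self_of_nhds.1).mono (le_max_right _ _)
  obtain ⟨η, hη, H⟩ := stable hS₀ hL₀ h
  have hc1 : Continuous fun z : (FamFun r q × ExpMap r) × (Fin q → ℝ) => z.1.2 := by fun_prop
  have hc2 : Continuous fun z : (FamFun r q × ExpMap r) × (Fin q → ℝ) => (z.1.1, z.2) := by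
    fun_prop
  have e1 := (hc1.tendsto ((G₀, F₀), t₀)).eventually (expMap_nhds hr F₀ (lt_min hη hη₁))
  have e2 := (hc2.tendsto ((G₀, F₀), t₀)).eventually (hK η hη)
  filter_upwards [e1, e2]
  rintro ⟨⟨G, F⟩, t⟩ ⟨h1, h2⟩ ⟨h3, h4⟩
  obtain ⟨hF, ⟨d, hd⟩, -⟩ := F.2
  refine H _ _ (hsys F.1 d (hF.of_le hr') hd (fun x => (h1 x).trans (min_le_right _ _))
    (fun x => (h2 x).trans (min_le_right _ _)) A (le_max_left _ _))
    (h3.mono (le_max_right _ _)) (fun x => ?_) h4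
  exact (dist_coe_le _ _).trans ((h1 (rep x)).trans (min_le_left _ _))

end MaxErg

/-- Lemma 2.7: for each `ε ∈ (0,1)`, the set of pairs `((f_t), T)` such that
`m_q({t ∈ [0,1]^q : Ω(f_t,T)` is a periodic orbit `}) > ε` is open in `𝓕 × 𝓔^r`. -/
theorem family_measure_open (r : ℕ∞) (hr : 1 ≤ r) (q : ℕ) (hq : 1 ≤ q)
    (ε : ℝ) (hε0 : 0 < ε) (hε1 : ε < 1) :
    IsOpen {p : FamFun r q × ExpMap r |
      ENNReal.ofReal ε < volume {t : Fin q → ℝ | (∀ i, t i ∈ Set.Icc (0 : ℝ) 1) ∧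
        IsPeriodicOrbit (cmap p.2.1) (OmegaSet (famMem p.1 t) (cmap p.2.1))}} := by
  rw [isOpen_iff_eventually]
  rintro ⟨G₀, F₀⟩ hp
  simp only [Set.mem_ofPred_eq] at hp ⊢
  have hopen : IsOpen {t : Fin q → ℝ |
      IsPeriodicOrbit (cmap F₀.1) (OmegaSet (famMem G₀ t) (cmap F₀.1))} := by
    rw [isOpen_iff_eventually]
    intro t ht
    have hc : Continuous fun t : Fin q → ℝ => ((G₀, F₀), t) := by fun_prop
    exact (hc.tendsto t).eventually (MaxErg.eventually_periodic hr G₀ F₀ t ht)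
  have hcube : MeasurableSet {t : Fin q → ℝ | ∀ i, t i ∈ Set.Icc (0 : ℝ) 1} := by
    rw [Set.ofPred_forall]
    exact MeasurableSet.iInter fun i => measurable_pi_apply i measurableSet_Icc
  -- A compact part of the set of good parameters still has measure larger than `ε`.
  obtain ⟨K, hKs, hK, hlt⟩ := (hcube.inter hopen.measurableSet).exists_lt_isCompact hp
  -- By compactness, one neighbourhood of `(G₀, F₀)` works for all parameters in `K`.
  have hev := hK.eventually_forall_of_forall_eventually (x₀ := (G₀, F₀))
    (P := fun p t => IsPeriodicOrbit (cmap p.2.1) (OmegaSet (famMem p.1 t) (cmap p.2.1)))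
    fun t ht => MaxErg.eventually_periodic hr G₀ F₀ t (hKs ht).2
  filter_upwards [hev] with p hp'
  exact hlt.trans_le (measure_mono fun t ht => ⟨(hKs ht).1, hp' t ht⟩)
end

section
/- Let T ∈ 𝓔^ω be orientation-preserving with T(π(0)) = π(0), let K be a nonempty compact subset of ℝ/ℤ with T(K) = K, and let f ∈ 𝓒^1. Suppose that K has no f-supercritical value and that there is a continuous sub-action g of (f,T) with K ⊆ E_{f,T,g}. Then T|K is Sturmian-like. -/
/-!
Write `h_i` for `h^f_i`. Iterating the sub-action inequality along an inverse branch, with equality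
on `K`, and using that inverse branches contract, every word `i ∈ CL(y, K)` satisfies
`h_i z - h_i y ≤ g z - g y` for all `z` (`hSum_sub_le`). Comparing `i ∈ CL(y, K)` with
`j ∈ CL(x, K)` gives `h_j y - h_j x ≤ g y - g x ≤ h_i y - h_i x`.

The derivatives `(h_i)'(x)` are jointly continuous in `(i, x)` (`continuous_hDeriv`), and the space
of words is compact. Hence if `y → x⁺` in `K`, any limit of words of `CL(y, K)` belongs to
`CL(x, K)` and maximises `(h_j)'(x)` over `j ∈ CL(x, K)`; from the left it minimises it
(`exists_maximal_word`, where a factor `σ = ±1` selects the side). As `x` is not supercritical, all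
extremal words share their first letter, so on each side of `x` the words of `CL(y, K)`, for
`y ∈ K` near `x`, all begin with one and the same letter `a` (`exists_side_letter`). Since every
preimage of `y` in `K` is the start of a word of `CL(y, K)`, the branch `τ_a` picks out the
unique preimage in `K` (`preimage_inter_eq`). The two one-sided branches glue to a map that is
continuous on a punctured neighbourhood of `x`, hence on each of its components.
-/

open MeasureTheory Topology Filter Set
open scoped UniformConvergence

/-! ### Inverse branches of the lift -/

lemma coe_add_intCast_circle (x : ℝ) (m : ℤ) : ((x + m : ℝ) : Circle1) = (x : Circle1) := by
  refine (QuotientAddGroup.eq.2 (AddSubgroup.mem_zmultiples_iff.2 ⟨-m, ?_⟩))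
  simp

lemma coe_add_natCast_circle (x : ℝ) (m : ℕ) : ((x + m : ℝ) : Circle1) = (x : Circle1) := by
  simpa using coe_add_intCast_circle x m

lemma exists_int_of_coe_eq {x y : ℝ} (h : (x : Circle1) = (y : Circle1)) :
    ∃ m : ℤ, y = x + m := by
  obtain ⟨m, hm⟩ := AddSubgroup.mem_zmultiples_iff.1 (QuotientAddGroup.eq.1 h)
  refine ⟨m, ?_⟩
  simp only [zsmul_eq_mul, mul_one] at hm
  linarith

namespace AnalyticExpandingLift

variable {F : ℝ → ℝ} {d : ℕ}

lemma continuous (hF : AnalyticExpandingLift F d) : Continuous F :=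
  continuous_iff_continuousAt.2 fun x => (hF.1 x).continuousAt

lemma apply_nat (hF : AnalyticExpandingLift F d) (n : ℕ) : F n = n * d := by
  induction n with
  | zero => simpa using hF.2.2.2.1
  | succ n ih => push_cast; rw [hF.2.1, ih]; ring

lemma apply_neg_nat (hF : AnalyticExpandingLift F d) (n : ℕ) : F (-n) = -(n * d) := by
  induction n with
  | zero => simpa using hF.2.2.2.1
  | succ n ih =>
    have h := hF.2.1 (-((n + 1 : ℕ) : ℝ))
    have e : -((n + 1 : ℕ) : ℝ) + 1 = -(n : ℝ) := by push_cast; ring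
    rw [e, ih] at h
    push_cast at h ⊢
    linarith

lemma surjective (hF : AnalyticExpandingLift F d) : Function.Surjective F := by
  intro y
  obtain ⟨n, hn⟩ := exists_nat_ge |y|
  have hd : (1 : ℝ) ≤ d := by exact_mod_cast (by have := hF.2.2.2.2.1; omega : 1 ≤ d)
  have hn0 : (0 : ℝ) ≤ n := Nat.cast_nonneg n
  have hnd : |y| ≤ n * d := by nlinarith
  refine mem_range_of_exists_le_of_exists_ge hF.continuous ⟨-n, ?_⟩ ⟨n, ?_⟩
  · rw [hF.apply_neg_nat]; linarith [neg_abs_le y]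
  · rw [hF.apply_nat]; linarith [le_abs_self y]

lemma apply_invFun (hF : AnalyticExpandingLift F d) (y : ℝ) : F (Function.invFun F y) = y :=
  Function.invFun_eq (hF.surjective y)

lemma invFun_apply (hF : AnalyticExpandingLift F d) (x : ℝ) : Function.invFun F (F x) = x :=
  Function.leftInverse_invFun hF.2.2.1.injective x

lemma continuous_invFun (hF : AnalyticExpandingLift F d) : Continuous (Function.invFun F) := by
  let e := hF.2.2.1.orderIsoOfSurjective F hF.surjective
  have h : Function.invFun F = e.symm := by
    funext y
    apply hF.2.2.1.injective
    rw [hF.apply_invFun]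
    exact (e.apply_symm_apply y).symm
  rw [h]
  exact e.symm.continuous

lemma apply_add_int (hF : AnalyticExpandingLift F d) (x : ℝ) (q : ℤ) :
    F (x + q) = F x + d * q := by
  induction q using Int.induction_on with
  | zero => simp
  | succ n ih =>
    push_cast at ih ⊢
    rw [← add_assoc, hF.2.1, ih]; ring
  | pred n ih =>
    have h := hF.2.1 (x + ((-(n : ℤ) - 1 : ℤ) : ℝ))
    have e : x + ((-(n : ℤ) - 1 : ℤ) : ℝ) + 1 = x + ((-(n : ℤ) : ℤ) : ℝ) := by push_cast; ring
    rw [e, ih] at h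
    push_cast at h ⊢
    linarith

lemma invFun_add_int (hF : AnalyticExpandingLift F d) (x : ℝ) (q : ℤ) :
    Function.invFun F (x + d * q) = Function.invFun F x + q := by
  apply hF.2.2.1.injective
  rw [hF.apply_invFun, hF.apply_add_int, hF.apply_invFun]

/-- `F` is a lift of `cmap F`. -/
lemma cmap_coe (hF : AnalyticExpandingLift F d) (x : ℝ) :
    cmap F (x : Circle1) = ((F x : ℝ) : Circle1) := by
  obtain ⟨q, hq⟩ := exists_int_of_coe_eq
    (AddCircle.coe_equivIco (p := (1 : ℝ)) (a := 0) (y := (x : Circle1)))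
  have h : F x = F (rep (x : Circle1)) + ((d * q : ℤ) : ℝ) := by
    push_cast
    rw [← hF.apply_add_int]
    exact congrArg F hq
  rw [h, coe_add_intCast_circle]
  rfl

/-- Every preimage of `π w` under `cmap F` is given by one of the `d` inverse branches at `w`. -/
lemma exists_branch (hF : AnalyticExpandingLift F d) {w : ℝ} {z : Circle1}
    (h : cmap F z = (w : Circle1)) :
    ∃ a : Fin d, ((Function.invFun F (w + ((a : ℕ) : ℝ)) : ℝ) : Circle1) = z := by
  obtain ⟨r, rfl⟩ := QuotientAddGroup.mk_surjective z
  obtain ⟨m, hm⟩ := exists_int_of_coe_eq ((hF.cmap_coe r).symm.trans h).symm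
  have hd : (d : ℤ) ≠ 0 := by have := hF.2.2.2.2.1; omega
  have h0 := Int.emod_nonneg m hd
  have h1 := Int.emod_lt_of_pos m (by omega : (0 : ℤ) < d)
  have h2 := Int.emod_add_mul_ediv m d
  refine ⟨⟨(m % d).toNat, by omega⟩, ?_⟩
  have h3 : (((m % d).toNat : ℕ) : ℝ) = ((m % d : ℤ) : ℝ) := by
    exact_mod_cast congrArg (Int.cast : ℤ → ℝ) (Int.toNat_of_nonneg h0)
  have h4 : w + ((m % d : ℤ) : ℝ) + d * ((m / d : ℤ) : ℝ) = F r := by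
    have h2' : ((m % d : ℤ) : ℝ) + d * ((m / d : ℤ) : ℝ) = m := by exact_mod_cast h2
    rw [hm, ← h2']; ring
  have h5 := hF.invFun_add_int (w + ((m % d : ℤ) : ℝ)) (m / d)
  rw [h4, hF.invFun_apply] at h5
  change ((Function.invFun F (w + (((m % d).toNat : ℕ) : ℝ)) : ℝ) : Circle1) = (r : Circle1)
  rw [h3, h5, coe_add_intCast_circle]

lemma continuous_tauIter (hF : AnalyticExpandingLift F d) (n : ℕ) :
    Continuous fun p : (ℕ → Fin d) × ℝ => tauIter F p.1 n p.2 := by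
  induction n with
  | zero => exact continuous_snd
  | succ n ih =>
    have h1 : Continuous fun p : (ℕ → Fin d) × ℝ => (((p.1 n : Fin d) : ℕ) : ℝ) :=
      (continuous_of_discreteTopology (f := fun a : Fin d => ((a : ℕ) : ℝ))).comp
        ((continuous_apply n).comp continuous_fst)
    exact hF.continuous_invFun.comp (ih.add h1)

/-- `τ_{i,n}` is a right inverse of `Fⁿ` up to an additive constant. -/
lemma exists_iterate_tauIter (hF : AnalyticExpandingLift F d) (i : ℕ → Fin d) (n : ℕ) :
    ∃ m : ℤ, ∀ x, F^[n] (tauIter F i n x) = x + m := by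
  have hadd : ∀ n : ℕ, ∀ (q : ℤ), ∃ m : ℤ, ∀ x : ℝ, F^[n] (x + q) = F^[n] x + m := by
    intro n
    induction n with
    | zero => exact fun q => ⟨q, fun x => rfl⟩
    | succ n ih =>
      intro q
      obtain ⟨m, hm⟩ := ih (d * q)
      refine ⟨m, fun x => ?_⟩
      rw [Function.iterate_succ_apply, Function.iterate_succ_apply, hF.apply_add_int, ← hm]
      push_cast; rfl
  induction n with
  | zero => exact ⟨0, fun x => by simp [tauIter]⟩
  | succ n ih =>
    obtain ⟨m, hm⟩ := ih
    obtain ⟨m', hm'⟩ := hadd n (i n : ℕ)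
    refine ⟨m + m', fun x => ?_⟩
    rw [Function.iterate_succ_apply, tauIter, hF.apply_invFun]
    have := hm' (tauIter F i n x)
    push_cast at this ⊢
    rw [this, hm]; ring

lemma differentiable_iterate (hF : AnalyticExpandingLift F d) (n : ℕ) :
    Differentiable ℝ F^[n] :=
  Differentiable.iterate (fun x => (hF.1 x).differentiableAt) n

lemma hasDerivAt_tauIter (hF : AnalyticExpandingLift F d) (i : ℕ → Fin d) (n : ℕ) (x : ℝ) :
    HasDerivAt (tauIter F i (n + 1)) (deriv F^[n + 1] (tauIter F i (n + 1) x))⁻¹ x := by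
  obtain ⟨m, hm⟩ := hF.exists_iterate_tauIter i (n + 1)
  obtain ⟨C, hC, l, hl, hb⟩ := hF.2.2.2.2.2
  have hne : deriv F^[n + 1] (tauIter F i (n + 1) x) ≠ 0 := by
    have := hb (n + 1) (by omega) (tauIter F i (n + 1) x)
    have h2 : 0 < C * l ^ (n + 1) := by positivity
    exact abs_pos.1 (h2.trans_le this)
  have hc : Continuous (tauIter F i (n + 1)) :=
    (hF.continuous_tauIter (n + 1)).comp (Continuous.prodMk_right i)
  have hd := ((hF.differentiable_iterate (n + 1)
    (tauIter F i (n + 1) x)).hasDerivAt).sub_const (m : ℝ)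
  refine HasDerivAt.of_local_left_inverse hc.continuousAt hd hne (Eventually.of_forall fun y => ?_)
  simp only [hm]; ring

lemma continuous_deriv_iterate (hF : AnalyticExpandingLift F d) (n : ℕ) :
    Continuous (deriv F^[n]) := by
  have h1 : ContDiff ℝ 1 F := contDiff_iff_contDiffAt.2 fun x => (hF.1 x).contDiffAt
  have h2 : ContDiff ℝ 1 F^[n] := by
    induction n with
    | zero => exact contDiff_id
    | succ n ih => exact ih.comp h1
  exact h2.continuous_deriv le_rfl

/-- The derivatives of the inverse branches of length `n + 1` are bounded, uniformly in the branch
and the point, by a summable sequence (a geometric one, by expansion). -/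
lemma exists_contraction (hF : AnalyticExpandingLift F d) :
    ∃ u : ℕ → ℝ, Summable u ∧ (∀ n, 0 ≤ u n) ∧
      ∀ (n : ℕ) (x : ℝ), |(deriv F^[n + 1] x)⁻¹| ≤ u n := by
  obtain ⟨C, hC, l, hl, hb⟩ := hF.2.2.2.2.2
  have hl0 : 0 < l := by linarith
  refine ⟨fun n => C⁻¹ * l⁻¹ * l⁻¹ ^ n, ?_, fun n => by positivity, fun n x => ?_⟩
  · exact (summable_geometric_of_lt_one (by positivity) (inv_lt_one_of_one_lt₀ hl)).mul_left _
  · have h := inv_anti₀ (by positivity) (hb (n + 1) (by omega) x)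
    rw [abs_inv]
    refine h.trans_eq ?_
    simp only [mul_inv, pow_succ, inv_pow]; ring

end AnalyticExpandingLift

/-! ### The functions `h_i` and their derivatives -/

/-- The derivative of `h^f_i` at `x`, as a series that converges uniformly in `(i, x)`. -/
noncomputable def hDeriv (F : ℝ → ℝ) {d : ℕ} (f : Circle1 → ℝ) (i : ℕ → Fin d) (x : ℝ) : ℝ :=
  ∑' n : ℕ, deriv (fun t : ℝ => f ↑t) (tauIter F i (n + 1) x) *
    (deriv F^[n + 1] (tauIter F i (n + 1) x))⁻¹

section Words

variable {F : ℝ → ℝ} {d : ℕ} {f : Circle1 → ℝ}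

lemma exists_deriv_bound (hf : ContDiff ℝ 1 fun x : ℝ => f ↑x) :
    ∃ M : ℝ, 0 ≤ M ∧ ∀ x, |deriv (fun t : ℝ => f ↑t) x| ≤ M := by
  have hp : Function.Periodic (deriv fun t : ℝ => f ↑t) 1 := by
    intro x
    rw [← deriv_comp_add_const]
    congr 1
    funext t
    simp
  obtain ⟨M, hM⟩ := (hp.isBounded_of_continuous one_ne_zero
    (hf.continuous_deriv le_rfl)).exists_norm_le
  exact ⟨M, (norm_nonneg _).trans (hM _ ⟨0, rfl⟩), fun x => hM _ ⟨x, rfl⟩⟩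

/-- The series defining `h^f_i` and its termwise derivative, with a summable bound on the latter
that is uniform in `(i, x)`. -/
lemma hSum_terms (hF : AnalyticExpandingLift F d) (hf : ContDiff ℝ 1 fun x : ℝ => f ↑x) :
    ∃ u : ℕ → ℝ, Summable u ∧ ∀ (i : ℕ → Fin d) (n : ℕ) (x : ℝ),
      HasDerivAt (fun x : ℝ => f ((tauIter F i (n + 1) x : ℝ) : Circle1) -
          f ((tauIter F i (n + 1) 0 : ℝ) : Circle1))
        (deriv (fun t : ℝ => f ↑t) (tauIter F i (n + 1) x) *
          (deriv F^[n + 1] (tauIter F i (n + 1) x))⁻¹) x ∧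
      ‖deriv (fun t : ℝ => f ↑t) (tauIter F i (n + 1) x) *
          (deriv F^[n + 1] (tauIter F i (n + 1) x))⁻¹‖ ≤ u n := by
  obtain ⟨M, hM0, hM⟩ := exists_deriv_bound hf
  obtain ⟨u, hu, hu0, hub⟩ := hF.exists_contraction
  refine ⟨fun n => M * u n, hu.mul_left M, fun i n x => ⟨?_, ?_⟩⟩
  · have h1 : HasDerivAt (fun t : ℝ => f ↑t) _ (tauIter F i (n + 1) x) :=
      ((hf.differentiable one_ne_zero) _).hasDerivAt
    exact (h1.comp x (hF.hasDerivAt_tauIter i n x)).sub_const _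
  · rw [norm_mul]
    exact mul_le_mul (hM _) (hub _ _) (norm_nonneg _) hM0

lemma hasDerivAt_hSum (hF : AnalyticExpandingLift F d) (hf : ContDiff ℝ 1 fun x : ℝ => f ↑x)
    (i : ℕ → Fin d) (x : ℝ) : HasDerivAt (hSum F i f) (hDeriv F f i x) x := by
  obtain ⟨u, hu, h⟩ := hSum_terms hF hf
  exact hasDerivAt_tsum hu (fun n y => (h i n y).1) (fun n y => (h i n y).2)
    (y₀ := 0) (by simp) x

lemma summable_hSum (hF : AnalyticExpandingLift F d) (hf : ContDiff ℝ 1 fun x : ℝ => f ↑x)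
    (i : ℕ → Fin d) (x : ℝ) :
    Summable fun n : ℕ => f ((tauIter F i (n + 1) x : ℝ) : Circle1) -
          f ((tauIter F i (n + 1) 0 : ℝ) : Circle1) := by
  obtain ⟨u, hu, h⟩ := hSum_terms hF hf
  exact summable_of_summable_hasDerivAt hu (fun n y => (h i n y).1) (fun n y => (h i n y).2)
    (y₀ := 0) (by simp) x

lemma continuous_hDeriv (hF : AnalyticExpandingLift F d)
    (hf : ContDiff ℝ 1 fun x : ℝ => f ↑x) :
    Continuous fun p : (ℕ → Fin d) × ℝ => hDeriv F f p.1 p.2 := by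
  obtain ⟨u, hu, h⟩ := hSum_terms hF hf
  obtain ⟨C, hC, l, hl, hb⟩ := hF.2.2.2.2.2
  refine continuous_tsum (fun n => ?_) hu fun n p => (h p.1 n p.2).2
  have ht := hF.continuous_tauIter (n + 1)
  refine ((hf.continuous_deriv le_rfl).comp ht).mul
    (((hF.continuous_deriv_iterate (n + 1)).comp ht).inv₀ fun p => ?_)
  have h2 : 0 < C * l ^ (n + 1) := by positivity
  exact abs_pos.1 (h2.trans_le (hb (n + 1) (by omega) _))

/-! ### Sub-actions along words in `CL(x, K)` -/

variable {K : Set Circle1} {g : Circle1 → ℝ}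

lemma cmap_tauIter_succ (hF : AnalyticExpandingLift F d) (i : ℕ → Fin d) (n : ℕ) (x : ℝ) :
    cmap F ((tauIter F i (n + 1) x : ℝ) : Circle1) = ((tauIter F i n x : ℝ) : Circle1) := by
  rw [hF.cmap_coe, tauIter, hF.apply_invFun]
  exact coe_add_natCast_circle _ _

lemma tendsto_tauIter_sub (hF : AnalyticExpandingLift F d) (i : ℕ → Fin d) (y z : ℝ) :
    Tendsto (fun n => tauIter F i (n + 1) z - tauIter F i (n + 1) y) atTop (𝓝 0) := by
  obtain ⟨u, hu, hu0, hub⟩ := hF.exists_contraction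
  refine squeeze_zero_norm (a := fun n => u n * ‖z - y‖) (fun n => ?_)
    (by simpa using hu.tendsto_atTop_zero.mul_const ‖z - y‖)
  exact convex_univ.norm_image_sub_le_of_norm_hasDerivWithin_le
    (fun x _ => (hF.hasDerivAt_tauIter i n x).hasDerivWithinAt) (fun x _ => hub n _)
    (mem_univ y) (mem_univ z)

/-- A word of `CL(y, K)` supports `g` from below at `y`: the increments of `g` from `y` dominate
those of `h_i`. -/
lemma hSum_sub_le (hF : AnalyticExpandingLift F d) (hf : ContDiff ℝ 1 fun x : ℝ => f ↑x)
    (hg : IsSubaction f (cmap F) g) (hKE : K ⊆ Eset f (cmap F) g) {i : ℕ → Fin d} {y : ℝ}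
    (hi : WordIn F i y K) (z : ℝ) :
    hSum F i f z - hSum F i f y ≤ g (z : Circle1) - g (y : Circle1) := by
  have hstep : ∀ n : ℕ, ∑ k ∈ Finset.range n,
      ((f ((tauIter F i (k + 1) z : ℝ) : Circle1) - f ((tauIter F i (k + 1) 0 : ℝ) : Circle1)) -
       (f ((tauIter F i (k + 1) y : ℝ) : Circle1) - f ((tauIter F i (k + 1) 0 : ℝ) : Circle1)))
      ≤ g (z : Circle1) - g (y : Circle1) -
        (g ((tauIter F i n z : ℝ) : Circle1) - g ((tauIter F i n y : ℝ) : Circle1)) := by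
    intro n
    induction n with
    | zero => simp [tauIter]
    | succ n ih =>
      rw [Finset.sum_range_succ]
      have h1 := hg.2 ((tauIter F i (n + 1) z : ℝ) : Circle1)
      have h2 := hKE (hi (n + 1) (by omega))
      simp only [Eset, mem_ofPred_eq] at h2
      rw [cmap_tauIter_succ hF] at h1 h2
      linarith
  have hgt : Tendsto (fun n => g ((tauIter F i (n + 1) z : ℝ) : Circle1) -
      g ((tauIter F i (n + 1) y : ℝ) : Circle1)) atTop (𝓝 0) := by
    have hd : Tendsto (fun n => dist ((tauIter F i (n + 1) z : ℝ) : Circle1)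
        ((tauIter F i (n + 1) y : ℝ) : Circle1)) atTop (𝓝 0) := by
      refine squeeze_zero (fun n => dist_nonneg) (fun n => ?_)
        (by simpa using (tendsto_tauIter_sub hF i y z).norm)
      rw [dist_eq_norm, ← AddCircle.coe_sub]
      exact QuotientAddGroup.norm_mk_le_norm
    have hgu := CompactSpace.uniformContinuous_of_continuous hg.1
    have h2 := Tendsto.comp hgu ((tendsto_uniformity_iff_dist_tendsto_zero
      (f := fun n => (((tauIter F i (n + 1) z : ℝ) : Circle1),
        ((tauIter F i (n + 1) y : ℝ) : Circle1)))).2 hd)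
    have h3 := tendsto_uniformity_iff_dist_tendsto_zero.1 h2
    refine tendsto_zero_iff_norm_tendsto_zero.2 ?_
    simpa [Function.comp_def, Real.dist_eq] using h3
  have hs := ((summable_hSum hF hf i z).hasSum.sub
    (summable_hSum hF hf i y).hasSum).tendsto_sum_nat
  have hs' := hs.comp (tendsto_add_atTop_nat 1)
  have hr := (tendsto_const_nhds (x := g (z : Circle1) - g (y : Circle1))).sub hgt
  rw [sub_zero] at hr
  exact le_of_tendsto_of_tendsto' hs' hr fun n => hstep (n + 1)

/-- Any choice of preimage `π(τ_a(y)) ∈ K` of `π y` extends to a word of `CL(y, K)`. -/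
lemma exists_wordIn (hF : AnalyticExpandingLift F d) (hKinv : cmap F '' K = K) {y : ℝ}
    {a : Fin d} (ha : ((Function.invFun F (y + ((a : ℕ) : ℝ)) : ℝ) : Circle1) ∈ K) :
    ∃ i : ℕ → Fin d, WordIn F i y K ∧ i 0 = a := by
  have hex : ∀ w : ℝ, ∃ b : Fin d, ((w : Circle1) ∈ K →
      ((Function.invFun F (w + ((b : ℕ) : ℝ)) : ℝ) : Circle1) ∈ K) ∧ (w = y → b = a) := by
    intro w
    by_cases hwy : w = y
    · exact ⟨a, fun _ => hwy ▸ ha, fun _ => rfl⟩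
    by_cases hw : (w : Circle1) ∈ K
    · obtain ⟨z, hzK, hz⟩ := hKinv.symm ▸ hw
      obtain ⟨b, hb⟩ := hF.exists_branch hz
      exact ⟨b, fun _ => hb ▸ hzK, fun h => absurd h hwy⟩
    · exact ⟨a, fun h => absurd h hw, fun _ => rfl⟩
  choose A hA hAy using hex
  let w : ℕ → ℝ := fun n => (fun w => Function.invFun F (w + ((A w : ℕ) : ℝ)))^[n] y
  have hw : ∀ n, w (n + 1) = Function.invFun F (w n + ((A (w n) : ℕ) : ℝ)) := fun n =>
    Function.iterate_succ_apply' _ _ _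
  have ht : ∀ n, tauIter F (fun n => A (w n)) n y = w n := by
    intro n
    induction n with
    | zero => rfl
    | succ n ih => rw [tauIter, ih, hw]
  have hyK : (y : Circle1) ∈ K := by
    rw [← hKinv]
    refine ⟨_, ha, ?_⟩
    rw [hF.cmap_coe, hF.apply_invFun]
    exact coe_add_natCast_circle _ _
  have hwK : ∀ n, (w n : Circle1) ∈ K := by
    intro n
    induction n with
    | zero => exact hyK
    | succ n ih => rw [hw]; exact hA _ ih
  exact ⟨fun n => A (w n), fun n _ => by rw [ht]; exact hwK n, hAy _ rfl⟩

/-- Limits of words `i_n ∈ CL(x + σ tₙ, K)` with `tₙ → 0⁺` lie in `CL(x, K)` and maximise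
`σ (h_i)'(x)` there. -/
lemma exists_maximal_word (hF : AnalyticExpandingLift F d)
    (hf : ContDiff ℝ 1 fun x : ℝ => f ↑x) (hKc : IsCompact K)
    (hg : IsSubaction f (cmap F) g) (hKE : K ⊆ Eset f (cmap F) g) {x σ : ℝ} {a : Fin d}
    (h : ∃ᶠ t in 𝓝[>] (0 : ℝ), ∃ i : ℕ → Fin d, WordIn F i (x + σ * t) K ∧ i 0 ≠ a) :
    ∃ i : ℕ → Fin d, WordIn F i x K ∧ i 0 ≠ a ∧
      ∀ j : ℕ → Fin d, WordIn F j x K → σ * hDeriv F f j x ≤ σ * hDeriv F f i x := by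
  obtain ⟨t, ht, hti⟩ := exists_seq_forall_of_frequently
    (h.and_eventually self_mem_nhdsWithin)
  choose iw hiw using fun n => (hti n).1
  obtain ⟨i, φ, hφ, hlim⟩ := CompactSpace.tendsto_subseq iw
  have ht0 : Tendsto (t ∘ φ) atTop (𝓝 0) :=
    (ht.mono_right nhdsWithin_le_nhds).comp hφ.tendsto_atTop
  have hpos : ∀ n, 0 < t n := fun n => (hti n).2
  refine ⟨i, fun m hm => ?_, ?_, fun j hj => ?_⟩
  · have hxlim : Tendsto (fun n => x + σ * t (φ n)) atTop (𝓝 x) := by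
      simpa using (ht0.const_mul σ).const_add x
    have hcl : Tendsto (fun n => ((tauIter F (iw (φ n)) m (x + σ * t (φ n)) : ℝ) : Circle1))
        atTop (𝓝 ((tauIter F i m x : ℝ) : Circle1)) :=
      ((AddCircle.continuous_mk' 1).comp (hF.continuous_tauIter m)).continuousAt.tendsto.comp
        (hlim.prodMk_nhds hxlim)
    exact hKc.isClosed.mem_of_tendsto hcl (Eventually.of_forall fun n => (hiw (φ n)).1 m hm)
  · have hcl : IsClosed {i : ℕ → Fin d | i 0 ≠ a} :=
      (isClosed_discrete {b : Fin d | b ≠ a}).preimage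
        (continuous_apply (A := fun _ : ℕ => Fin d) 0)
    exact hcl.mem_of_tendsto hlim (Eventually.of_forall fun n => (hiw (φ n)).2)
  · -- The mean value theorem for `h_{i_n} - h_j` on the segment from `x` to `x + σ tₙ`.
    have hmv : ∀ n, ∃ ξ ∈ Ioo 0 (t n),
        σ * hDeriv F f j (x + σ * ξ) ≤ σ * hDeriv F f (iw n) (x + σ * ξ) := by
      intro n
      have hder : ∀ s : ℝ, HasDerivAt
          (fun s => hSum F (iw n) f (x + σ * s) - hSum F j f (x + σ * s))
          (hDeriv F f (iw n) (x + σ * s) * σ - hDeriv F f j (x + σ * s) * σ) s := by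
        intro s
        have hin : HasDerivAt (fun s : ℝ => x + σ * s) σ s := by
          simpa using ((hasDerivAt_id s).const_mul σ).const_add x
        exact ((hasDerivAt_hSum hF hf (iw n) _).comp s hin).sub
          ((hasDerivAt_hSum hF hf j _).comp s hin)
      obtain ⟨ξ, hξ, hξe⟩ := exists_hasDerivAt_eq_slope _ _ (hpos n)
        (fun s _ => (hder s).continuousAt.continuousWithinAt) fun s _ => hder s
      refine ⟨ξ, hξ, ?_⟩
      have h1 := hSum_sub_le hF hf hg hKE (hiw n).1 x
      have h2 := hSum_sub_le hF hf hg hKE hj (x + σ * t n)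
      have h3 : 0 ≤ hDeriv F f (iw n) (x + σ * ξ) * σ - hDeriv F f j (x + σ * ξ) * σ := by
        rw [hξe]
        refine div_nonneg ?_ (by linarith [hpos n])
        simp only [mul_zero, add_zero]
        linarith
      linarith
    choose ξ hξ hle using hmv
    have hξ0 : Tendsto (ξ ∘ φ) atTop (𝓝 0) :=
      squeeze_zero (fun n => (hξ (φ n)).1.le) (fun n => (hξ (φ n)).2.le) ht0
    have hxlim : Tendsto (fun n => x + σ * ξ (φ n)) atTop (𝓝 x) := by
      simpa using (hξ0.const_mul σ).const_add x
    have hc := continuous_hDeriv (d := d) hF hf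
    have l1 : Tendsto (fun n => σ * hDeriv F f j (x + σ * ξ (φ n))) atTop
        (𝓝 (σ * hDeriv F f j x)) :=
      (hc.continuousAt.tendsto.comp
        ((tendsto_const_nhds (x := j)).prodMk_nhds hxlim)).const_mul σ
    have l2 : Tendsto (fun n => σ * hDeriv F f (iw (φ n)) (x + σ * ξ (φ n))) atTop
        (𝓝 (σ * hDeriv F f i x)) :=
      (hc.continuousAt.tendsto.comp (hlim.prodMk_nhds hxlim)).const_mul σ
    exact le_of_tendsto_of_tendsto' l1 l2 fun n => hle (φ n)

/-- On each side of `x` (the sign of `σ`), points of `K` near `x` have only one possible first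
letter. -/
lemma exists_side_letter (hF : AnalyticExpandingLift F d)
    (hf : ContDiff ℝ 1 fun x : ℝ => f ↑x) (hKc : IsCompact K)
    (hnosc : ¬ ∃ x : ℝ, IsSupercriticalValue F d f K x)
    (hg : IsSubaction f (cmap F) g) (hKE : K ⊆ Eset f (cmap F) g) {x σ : ℝ} (hσ : σ ≠ 0)
    (hx : (x : Circle1) ∈ K) :
    ∃ a : Fin d, ∀ᶠ t in 𝓝[>] (0 : ℝ),
      ∀ i : ℕ → Fin d, WordIn F i (x + σ * t) K → i 0 = a := by
  by_contra! hcon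
  have key : ∀ a : Fin d, ∃ i : ℕ → Fin d, WordIn F i x K ∧ i 0 ≠ a ∧
      ∀ j : ℕ → Fin d, WordIn F j x K → σ * hDeriv F f j x ≤ σ * hDeriv F f i x := by
    intro a
    exact exists_maximal_word hF hf hKc hg hKE (hcon a)
  obtain ⟨i, hi, -, himax⟩ := key ⟨0, by have := hF.2.2.2.2.1; omega⟩
  obtain ⟨j, hj, hji, hjmax⟩ := key (i 0)
  refine hnosc ⟨x, hx, j, i, hj, hi, hji, ?_⟩
  rw [(hasDerivAt_hSum hF hf j x).deriv, (hasDerivAt_hSum hF hf i x).deriv]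
  exact mul_left_cancel₀ hσ (le_antisymm (himax j hj) (hjmax i hi))

/-- If every word of `CL(y, K)` starts with `a`, then `π(τ_a(y))` is the only preimage of `π y`
in `K`. -/
lemma preimage_inter_eq (hF : AnalyticExpandingLift F d) (hKinv : cmap F '' K = K) {y : ℝ}
    (hy : (y : Circle1) ∈ K) {a : Fin d} (ha : ∀ i : ℕ → Fin d, WordIn F i y K → i 0 = a) :
    cmap F ⁻¹' {(y : Circle1)} ∩ K =
      {((Function.invFun F (y + ((a : ℕ) : ℝ)) : ℝ) : Circle1)} := by
  have hsub : ∀ z ∈ K, cmap F z = (y : Circle1) →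
      z = ((Function.invFun F (y + ((a : ℕ) : ℝ)) : ℝ) : Circle1) := by
    intro z hzK hz
    obtain ⟨b, hb⟩ := hF.exists_branch hz
    obtain ⟨i, hi, hib⟩ := exists_wordIn hF hKinv (hb.symm ▸ hzK)
    rw [← ha i hi, hib, hb]
  obtain ⟨z, hzK, hz⟩ := hKinv.symm ▸ hy
  ext v
  constructor
  · rintro ⟨hv, hvK⟩
    exact hsub v hvK hv
  · rintro rfl
    exact hsub z hzK hz ▸ ⟨hz, hzK⟩

end Words


/-- Proposition 3.4: if a nonempty compact `T`-invariant set `K` has no `f`-supercritical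
value and is contained in `E_{f,T,g}` for some continuous sub-action `g`, then `T|K` is
Sturmian-like. -/
theorem no_supercritical_implies_sturmianLike (F : ℝ → ℝ) (d : ℕ)
    (hF : AnalyticExpandingLift F d)
    (K : Set Circle1) (hKne : K.Nonempty) (hKc : IsCompact K) (hKinv : cmap F '' K = K)
    (f : Circle1 → ℝ) (hf : ContDiff ℝ 1 fun x : ℝ => f ↑x)
    (hnosc : ¬ ∃ x : ℝ, IsSupercriticalValue F d f K x)
    (g : Circle1 → ℝ) (hg : IsSubaction f (cmap F) g) (hKE : K ⊆ Eset f (cmap F) g) :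
    SturmianLike (cmap F) K := by
  rintro x₀ ⟨hx₀, -⟩
  obtain ⟨x, rfl⟩ := QuotientAddGroup.mk_surjective x₀
  obtain ⟨a, ha⟩ := exists_side_letter hF hf hKc hnosc hg hKE one_ne_zero hx₀
  obtain ⟨b, hb⟩ := exists_side_letter hF hf hKc hnosc hg hKE (neg_ne_zero.2 one_ne_zero) hx₀
  obtain ⟨ε, hε, hab⟩ := mem_nhdsGT_iff_exists_Ioo_subset.1 (ha.and hb)
  have hε : 0 < ε := hε
  set δ := min ε (1 / 2) with hδ
  have hδ0 : 0 < δ := lt_min hε (by norm_num)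
  have hδε : δ ≤ ε := min_le_left _ _
  have hδh : δ ≤ 1 / 2 := min_le_right _ _
  -- The branch is described through the representative in `[x - 1/2, x + 1/2)`.
  let r : Circle1 → ℝ := fun z => (AddCircle.equivIco 1 (x - 1 / 2) z : ℝ)
  have hr : ∀ z, ((r z : ℝ) : Circle1) = z := fun z =>
    (AddCircle.equivIco 1 (x - 1 / 2)).symm_apply_apply z
  have hrw : ∀ w ∈ Ioo (x - δ) (x + δ), r (w : Circle1) = w := by
    intro w hw
    exact AddCircle.equivIco_coe_of_mem (p := (1 : ℝ)) (a := x - 1 / 2)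
      ⟨by linarith [hw.1], by linarith [hw.2]⟩
  have hrc : ∀ w ∈ Ioo (x - δ) (x + δ), ContinuousAt r (w : Circle1) := by
    intro w hw
    refine continuousAt_subtype_val.comp (AddCircle.continuousAt_equivIco 1 (x - 1 / 2) ?_)
    intro h
    have h1 := AddCircle.equivIco_coe_of_mem (p := (1 : ℝ)) (a := x - 1 / 2)
      (y := x - 1 / 2) ⟨le_rfl, by linarith⟩
    rw [← h] at h1
    have h2 : w = x - 1 / 2 := (hrw w hw).symm.trans h1
    linarith [hw.1]
  let s : Circle1 → Circle1 := fun z => if x < r z then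
      ((Function.invFun F (r z + ((a : ℕ) : ℝ)) : ℝ) : Circle1)
    else ((Function.invFun F (r z + ((b : ℕ) : ℝ)) : ℝ) : Circle1)
  have hTs : ∀ z, cmap F (s z) = z := by
    intro z
    have h : ∀ c : ℕ, cmap F ((Function.invFun F (r z + (c : ℝ)) : ℝ) : Circle1) = z := by
      intro c
      rw [hF.cmap_coe, hF.apply_invFun]
      rw [coe_add_natCast_circle, hr]
    by_cases hz : x < r z
    · simp only [s, if_pos hz, h]
    · simp only [s, if_neg hz, h]
  have hU : ((↑) '' Ioo (x - δ) (x + δ) : Set Circle1) ∈ 𝓝 (x : Circle1) :=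
    (QuotientAddGroup.isOpenMap_coe _ isOpen_Ioo).mem_nhds
      ⟨x, ⟨by linarith, by linarith⟩, rfl⟩
  refine ⟨_, hU, (isConnected_Ioo (by linarith)).image _
    (AddCircle.continuous_mk' 1).continuousOn, fun β _ => ⟨s, ?_, fun y _ => hTs y, ?_⟩⟩
  · refine ContinuousOn.mono ?_ (connectedComponentIn_subset _ _)
    rintro _ ⟨⟨w, hw, rfl⟩, hwx⟩
    have hwx' : w ≠ x := fun h => hwx (by rw [h]; rfl)
    refine ContinuousAt.continuousWithinAt ?_
    have hcont : ∀ c : ℕ, ContinuousAt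
        (fun z => ((Function.invFun F (r z + (c : ℝ)) : ℝ) : Circle1)) (w : Circle1) := fun c =>
      ((AddCircle.continuous_mk' 1).comp hF.continuous_invFun).continuousAt.comp
        ((hrc w hw).add continuousAt_const)
    rcases lt_or_gt_of_ne hwx' with hlt | hgt
    · refine (hcont b).congr ?_
      filter_upwards [(hrc w hw).eventually_lt continuousAt_const (by rwa [hrw w hw])] with z hz
      simp only [s, if_neg (not_lt.2 hz.le)]
    · refine (hcont a).congr ?_
      filter_upwards [continuousAt_const.eventually_lt (hrc w hw) (by rwa [hrw w hw])] with z hz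
      simp only [s, if_pos hz]
  · rintro y ⟨hyK, hyC⟩
    obtain ⟨⟨w, hw, rfl⟩, hwx⟩ := connectedComponentIn_subset _ _ hyC
    have hwx' : w ≠ x := fun h => hwx (by rw [h]; rfl)
    rcases lt_or_gt_of_ne hwx' with hlt | hgt
    · have h := (hab (a := x - w) ⟨by linarith, by linarith [hw.1]⟩).2
      rw [show x + -1 * (x - w) = w by ring] at h
      rw [preimage_inter_eq hF hKinv hyK h]
      simp only [s, hrw w hw, if_neg (not_lt.2 hlt.le)]
    · have h := (hab (a := w - x) ⟨by linarith, by linarith [hw.2]⟩).1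
      rw [show x + 1 * (w - x) = w by ring] at h
      rw [preimage_inter_eq hF hKinv hyK h]
      simp only [s, hrw w hw, if_pos hgt]
end
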